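/- arXiv:math/0507156 — 6 statements merged into one kernel-verified Lean document; each statement's English description precedes it below -/
import Mathlib

section
/- For every integer m ≥ 2 and every t ∈ (0,1), one has f_m(t) < f_{m+1}(t) and f_{m+1}(t) < t/(1 − t). -/
open scoped BigOperators

/-- `fm m t = ∑_{k=1}^{m-1} t^k * cos (π / (⌊(m-1)/k⌋ + 2))`, where `(m-1)/k` is the
integer part of `(m-1)/k` (natural number division). -/
noncomputable def fm (m : ℕ) (t : ℝ) : ℝ :=
  ∑ k ∈ Finset.Icc 1 (m - 1), t ^ k * Real.cos (Real.pi / (((m - 1) / k + 2 : ℕ) : ℝ))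

/-!
Passing from `m` to `m + 1` increases every coefficient `cos (π / (⌊(m - 1) / k⌋ + 2))` weakly,
since `cos (π / x)` increases for `x ≥ 1`, and adds the positive term `t ^ m * cos (π / 3)`.
Bounding the cosines by `1` gives only the weak inequality `f_m(t) ≤ ∑ t ^ k ≤ t / (1 - t)`; the
strict one is inherited from the strict increase in `m`.
-/

theorem strictMonoOn_cos_pi_div :
    StrictMonoOn (fun x : ℝ ↦ Real.cos (Real.pi / x)) (Set.Ici 1) := by
  intro x (hx : 1 ≤ x) y (hy : 1 ≤ y) hxy
  have hlt : Real.pi / y < Real.pi / x :=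
    div_lt_div_of_pos_left Real.pi_pos (by positivity) hxy
  exact Real.cos_lt_cos_of_nonneg_of_le_pi (by positivity) (div_le_self Real.pi_pos.le hx) hlt

theorem monotone_cos_pi_div_add_two :
    Monotone fun n : ℕ ↦ Real.cos (Real.pi / ((n + 2 : ℕ) : ℝ)) := by
  have hone (n : ℕ) : (1 : ℝ) ≤ ((n + 2 : ℕ) : ℝ) := Nat.one_le_cast.mpr (Nat.le_add_left 1 (n + 1))
  intro n p hnp
  exact strictMonoOn_cos_pi_div.monotoneOn (hone n) (hone p)
    (Nat.cast_le.mpr (Nat.add_le_add_right hnp 2))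

theorem fm_eq_sum_Ico (m : ℕ) (t : ℝ) :
    fm m t = ∑ k ∈ Finset.Ico 1 m,
      t ^ k * Real.cos (Real.pi / (((m - 1) / k + 2 : ℕ) : ℝ)) := by
  have hIcc : Finset.Icc 1 (m - 1) = Finset.Ico 1 m := by
    ext k
    simp only [Finset.mem_Icc, Finset.mem_Ico]
    omega
  rw [fm, hIcc]

theorem fm_lt_fm_succ {m : ℕ} (hm : 1 ≤ m) {t : ℝ} (ht : 0 < t) : fm m t < fm (m + 1) t := by
  have hcoeff (k : ℕ) : Real.cos (Real.pi / (((m - 1) / k + 2 : ℕ) : ℝ)) ≤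
      Real.cos (Real.pi / ((m / k + 2 : ℕ) : ℝ)) :=
    monotone_cos_pi_div_add_two (Nat.div_le_div_right (m.sub_le 1))
  have hnew : 0 < t ^ m * Real.cos (Real.pi / ((m / m + 2 : ℕ) : ℝ)) := by
    have hcos : Real.cos (Real.pi / ((m / m + 2 : ℕ) : ℝ)) = 1 / 2 := by
      rw [Nat.div_self hm, ← Real.cos_pi_div_three]
      norm_num
    rw [hcos]
    positivity
  calc fm m t
      = ∑ k ∈ Finset.Ico 1 m, t ^ k * Real.cos (Real.pi / (((m - 1) / k + 2 : ℕ) : ℝ)) :=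
        fm_eq_sum_Ico m t
    _ ≤ ∑ k ∈ Finset.Ico 1 m, t ^ k * Real.cos (Real.pi / ((m / k + 2 : ℕ) : ℝ)) := by
        gcongr with k
        exact hcoeff k
    _ < (∑ k ∈ Finset.Ico 1 m, t ^ k * Real.cos (Real.pi / ((m / k + 2 : ℕ) : ℝ))) +
          t ^ m * Real.cos (Real.pi / ((m / m + 2 : ℕ) : ℝ)) :=
        lt_add_of_pos_right _ hnew
    _ = fm (m + 1) t := by
        rw [fm_eq_sum_Ico, Finset.sum_Ico_succ_top hm, Nat.add_sub_cancel]

theorem fm_le_div_one_sub (m : ℕ) {t : ℝ} (ht₀ : 0 ≤ t) (ht₁ : t < 1) :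
    fm m t ≤ t / (1 - t) :=
  calc fm m t
      = ∑ k ∈ Finset.Ico 1 m, t ^ k * Real.cos (Real.pi / (((m - 1) / k + 2 : ℕ) : ℝ)) :=
        fm_eq_sum_Ico m t
    _ ≤ ∑ k ∈ Finset.Ico 1 m, t ^ k :=
        Finset.sum_le_sum fun k _ ↦
          mul_le_of_le_one_right (pow_nonneg ht₀ k) (Real.cos_le_one _)
    _ ≤ t ^ 1 / (1 - t) := geom_sum_Ico_le_of_lt_one ht₀ ht₁
    _ = t / (1 - t) := by rw [pow_one]

theorem fm_lt_div_one_sub {m : ℕ} (hm : 1 ≤ m) {t : ℝ} (ht₀ : 0 < t) (ht₁ : t < 1) :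
    fm m t < t / (1 - t) :=
  (fm_lt_fm_succ hm ht₀).trans_le (fm_le_div_one_sub (m + 1) ht₀.le ht₁)

theorem stmt_1 (m : ℕ) (hm : 2 ≤ m) (t : ℝ) (ht : t ∈ Set.Ioo (0 : ℝ) 1) :
    fm m t < fm (m + 1) t ∧ fm (m + 1) t < t / (1 - t) :=
  ⟨fm_lt_fm_succ (one_le_two.trans hm) ht.1, fm_lt_div_one_sub m.succ_pos ht.1 ht.2⟩
end

section
/- The sequence (t_m)_{m≥2} satisfies 1/3 < t_{m+1} < t_m for every m ≥ 2 (so it is strictly decreasing and bounded below by 1/3), and t_m → 1/3 as m → ∞. -/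
open scoped BigOperators

/-!
As `m` grows, the coefficients of `f_m` increase to `1`, so on `(0, 1)` the polynomials `f_m`
increase strictly to the geometric series `x / (1 - x)`, which equals `1 / 2` at `x = 1 / 3`. Each
`f_m` is nondecreasing on `[0, ∞)`, so an inequality between values of `f_m` gives the same
inequality between the arguments. Hence the solutions `t_m` decrease, stay above `1 / 3`, and
converge to the solution `1 / 3` of the limiting equation.
-/

open Filter Set Topology

theorem tendsto_of_monotoneOn_of_apply_eq {ι α β : Type*}
    [LinearOrder α] [DenselyOrdered α] [TopologicalSpace α] [OrderTopology α]
    [LinearOrder β] [TopologicalSpace β] [OrderClosedTopology β]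
    {l : Filter ι} {f : ι → α → β} {g : α → β} {s u : Set α} {t : ι → α} {a : α}
    (hf : ∀ i, MonotoneOn (f i) s) (hus : u ⊆ s) (hu : u ∈ 𝓝 a) (hg : StrictMonoOn g u)
    (hfg : ∀ x ∈ u, Tendsto (fun i ↦ f i x) l (𝓝 (g x)))
    (ht : ∀ᶠ i in l, t i ∈ s ∧ f i (t i) = g a) :
    Tendsto t l (𝓝 a) := by
  have ha : a ∈ u := mem_of_mem_nhds hu
  refine tendsto_order.2 ⟨fun b hb ↦ ?_, fun b hb ↦ ?_⟩
  · have : (𝓝[<] a).NeBot := nhdsLT_neBot_of_exists_lt ⟨b, hb⟩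
    obtain ⟨x, hxu, hbx, hxa⟩ :=
      Filter.nonempty_of_mem (inter_mem (mem_nhdsWithin_of_mem_nhds hu) (Ioo_mem_nhdsLT hb))
    filter_upwards [ht, (hfg x hxu).eventually_lt_const (hg hxu ha hxa)] with i hti hxi
    exact hbx.trans ((hf i).reflect_lt (hus hxu) hti.1 (hxi.trans_eq hti.2.symm))
  · have : (𝓝[>] a).NeBot := nhdsGT_neBot_of_exists_gt ⟨b, hb⟩
    obtain ⟨x, hxu, hax, hxb⟩ :=
      Filter.nonempty_of_mem (inter_mem (mem_nhdsWithin_of_mem_nhds hu) (Ioo_mem_nhdsGT hb))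
    filter_upwards [ht, (hfg x hxu).eventually_const_lt (hg ha hxu hax)] with i hti hxi
    exact ((hf i).reflect_lt hti.1 (hus hxu) (hti.2.trans_lt hxi)).trans hxb

theorem strictMonoOn_div_one_sub : StrictMonoOn (fun x : ℝ ↦ x / (1 - x)) (Iio 1) := by
  intro x hx y hy hxy
  rw [mem_Iio] at hx hy
  rw [div_lt_div_iff₀ (by linarith) (by linarith)]
  linarith

theorem tsum_geometric_succ {x : ℝ} (hx : |x| < 1) : ∑' k : ℕ, x ^ (k + 1) = x / (1 - x) := by
  simp only [pow_succ', tsum_mul_left, tsum_geometric_of_abs_lt_one hx, div_eq_mul_inv]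

/-- The coefficient of `x ^ k` in `fm m x`, for `1 ≤ k`. It is defined for all `k` but vanishes when
`m ≤ k`, so that `fm m x` can also be written with more terms than in its definition. -/
noncomputable def fmCoeff (m k : ℕ) : ℝ :=
  Real.cos (Real.pi / (((m - 1) / k + 2 : ℕ) : ℝ))

theorem fmCoeff_nonneg (m k : ℕ) : 0 ≤ fmCoeff m k := by
  apply Real.cos_nonneg_of_neg_pi_div_two_le_of_le
  · linarith [Real.pi_pos, show 0 ≤ Real.pi / (((m - 1) / k + 2 : ℕ) : ℝ) by positivity]
  · gcongr
    exact_mod_cast Nat.le_add_left 2 _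

theorem abs_fmCoeff_le_one (m k : ℕ) : |fmCoeff m k| ≤ 1 :=
  Real.abs_cos_le_one _

theorem monotone_fmCoeff (k : ℕ) : Monotone fun m ↦ fmCoeff m k := by
  intro m n hmn
  apply Real.cos_le_cos_of_nonneg_of_le_pi
  · positivity
  · exact div_le_self Real.pi_pos.le (by exact_mod_cast Nat.le_add_left 1 _)
  · gcongr

theorem fmCoeff_eq_zero {m k : ℕ} (h : m ≤ k) : fmCoeff m k = 0 := by
  have hdiv : (m - 1) / k = 0 := Nat.div_eq_zero_iff.2 (by lia)
  simp [fmCoeff, hdiv]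

theorem fmCoeff_succ_self_pos {k : ℕ} (hk : 0 < k) : 0 < fmCoeff (k + 1) k := by
  norm_num [fmCoeff, Nat.div_self hk]

theorem tendsto_fmCoeff {k : ℕ} (hk : k ≠ 0) : Tendsto (fun m ↦ fmCoeff m k) atTop (𝓝 1) := by
  have hdiv : Tendsto (fun m ↦ (m - 1) / k + 2) atTop atTop :=
    (tendsto_add_atTop_nat 2).comp <|
      (Nat.tendsto_div_const_atTop hk).comp (tendsto_sub_atTop_nat 1)
  have hangle := (tendsto_natCast_atTop_atTop (R := ℝ).comp hdiv).const_div_atTop Real.pi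
  rw [← Real.cos_zero]
  exact (Real.continuous_cos.tendsto 0).comp hangle

theorem fm_eq_sum_range {m n : ℕ} (h : m ≤ n + 1) (x : ℝ) :
    fm m x = ∑ k ∈ Finset.range n, x ^ (k + 1) * fmCoeff m (k + 1) := by
  calc fm m x = ∑ k ∈ Finset.Icc 1 n, x ^ k * fmCoeff m k := by
        refine Finset.sum_subset (Finset.Icc_subset_Icc_right (by lia)) fun k hk hkm ↦ ?_
        rw [Finset.mem_Icc] at hk hkm
        exact mul_eq_zero_of_right _ (fmCoeff_eq_zero (by lia))
    _ = _ := by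
        rw [← Finset.Ico_add_one_right_eq_Icc, Finset.sum_Ico_eq_sum_range]
        simp only [Nat.add_sub_cancel, add_comm 1]

theorem fm_eq_tsum (m : ℕ) (x : ℝ) : fm m x = ∑' k : ℕ, x ^ (k + 1) * fmCoeff m (k + 1) := by
  rw [fm_eq_sum_range m.le_succ, tsum_eq_sum]
  intro k hk
  rw [Finset.mem_range, not_lt] at hk
  rw [fmCoeff_eq_zero (by lia), mul_zero]

theorem monotoneOn_fm (m : ℕ) : MonotoneOn (fm m) (Ici 0) := by
  intro x hx y _ hxy
  rw [mem_Ici] at hx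
  refine Finset.sum_le_sum fun k _ ↦ ?_
  exact mul_le_mul_of_nonneg_right (by gcongr) (fmCoeff_nonneg m k)

theorem strictMono_fm_succ {x : ℝ} (hx : 0 < x) : StrictMono fun n ↦ fm (n + 1) x := by
  refine strictMono_nat_of_lt_succ fun n ↦ ?_
  rw [fm_eq_sum_range (n := n + 1) (by lia), fm_eq_sum_range (n := n + 1) le_rfl]
  refine Finset.sum_lt_sum (fun k _ ↦ ?_) ⟨n, Finset.self_mem_range_succ n, ?_⟩
  · gcongr
    exact monotone_fmCoeff _ (Nat.le_succ _)
  · gcongr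
    exact (fmCoeff_eq_zero le_rfl).trans_lt (fmCoeff_succ_self_pos n.succ_pos)

theorem tendsto_fm {x : ℝ} (hx : |x| < 1) :
    Tendsto (fun m ↦ fm m x) atTop (𝓝 (x / (1 - x))) := by
  simp only [fm_eq_tsum, ← tsum_geometric_succ hx]
  refine tendsto_tsum_of_dominated_convergence (bound := fun k ↦ |x| ^ (k + 1)) ?_ ?_ ?_
  · exact (summable_nat_add_iff 1).2 (summable_geometric_of_lt_one (abs_nonneg x) hx)
  · intro k
    simpa only [mul_one] using (tendsto_fmCoeff k.succ_ne_zero).const_mul (x ^ (k + 1))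
  · refine .of_forall fun m k ↦ ?_
    rw [norm_mul, norm_pow, Real.norm_eq_abs, Real.norm_eq_abs]
    exact mul_le_of_le_one_right (by positivity) (abs_fmCoeff_le_one m _)

theorem fm_succ_lt_div_one_sub (n : ℕ) {x : ℝ} (hx₀ : 0 < x) (hx₁ : x < 1) :
    fm (n + 1) x < x / (1 - x) := by
  have hmono := strictMono_fm_succ hx₀
  have hlim := (tendsto_fm (abs_lt.2 ⟨by linarith, hx₁⟩)).comp (tendsto_add_atTop_nat 1)
  exact (hmono n.lt_succ_self).trans_le (hmono.monotone.ge_of_tendsto hlim (n + 1))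

theorem stmt_2 (t : ℕ → ℝ)
    (ht : ∀ m : ℕ, 2 ≤ m → t m ∈ Set.Ioc (0 : ℝ) 1 ∧ fm m (t m) = 1 / 2) :
    (∀ m : ℕ, 2 ≤ m → 1 / 3 < t (m + 1) ∧ t (m + 1) < t m) ∧
    Filter.Tendsto t Filter.atTop (nhds (1 / 3)) := by
  have geometric_third : (1 / 3 : ℝ) / (1 - 1 / 3) = 1 / 2 := by norm_num
  have t_pos {m : ℕ} (hm : 2 ≤ m) : 0 < t m := (ht m hm).1.1
  have fm_t {m : ℕ} (hm : 2 ≤ m) : fm m (t m) = 1 / 2 := (ht m hm).2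
  refine ⟨fun m hm ↦ ⟨?lower_bound, ?decreasing⟩, ?limit⟩
  case lower_bound =>
    refine (monotoneOn_fm (m + 1)).reflect_lt (by norm_num) (t_pos (by lia)).le ?_
    rw [fm_t (by lia), ← geometric_third]
    exact fm_succ_lt_div_one_sub m (by norm_num) (by norm_num)
  case decreasing =>
    refine (monotoneOn_fm (m + 1)).reflect_lt (t_pos (by lia)).le (t_pos hm).le ?_
    obtain ⟨n, rfl⟩ : ∃ n, m = n + 1 := ⟨m - 1, by lia⟩
    rw [fm_t (by lia), ← fm_t hm]
    exact strictMono_fm_succ (t_pos hm) n.lt_succ_self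
  case limit =>
    refine tendsto_of_monotoneOn_of_apply_eq (u := Ioo 0 1) monotoneOn_fm
      (Ioo_subset_Ioi_self.trans Ioi_subset_Ici_self) (Ioo_mem_nhds (by norm_num) (by norm_num))
      (strictMonoOn_div_one_sub.mono Ioo_subset_Iio_self)
      (fun x hx ↦ tendsto_fm (abs_lt.2 ⟨by linarith [hx.1], hx.2⟩)) ?_
    filter_upwards [eventually_ge_atTop 2] with m hm
    exact ⟨(t_pos hm).le, (fm_t hm).trans geometric_third.symm⟩
end

section
/- Let m ≥ 2 be an integer and let (a_α)_{|α| ≤ m−1} be complex numbers with a_{g₀} real and a_{g₀} ≥ 0. Set p(S) := ∑_{|α| ≤ m−1} a_α S_α, a bounded operator on ℓ²(𝔽ₙ⁺). If Re p(S) ≤ I, then for every complex Hilbert space 𝒦 and every (T₁,…,Tₙ) ∈ [B(𝒦)ⁿ]_{t_m}, one has ∑_{k=0}^{m−1} ‖∑_{|α|=k} |a_α| T_α‖ ≤ 1. -/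
open scoped BigOperators

/-- The full Fock space, identified with `ℓ²(𝔽ₙ⁺)` where the free monoid `𝔽ₙ⁺` on `n`
generators is identified with `List (Fin n)`. -/
noncomputable abbrev Fock (n : ℕ) : Type := lp (fun _ : List (Fin n) => ℂ) 2

/-- The orthonormal basis vector `e_α` of the Fock space. -/
noncomputable def fockBasis (n : ℕ) (α : List (Fin n)) : Fock n := lp.single 2 α 1

/-- For a word `α = g_{i₁} ⋯ g_{i_k}`, the product `T_α = T_{i₁} ⋯ T_{i_k}` (and `T_{g₀} = 1`). -/
noncomputable def wordProd {n : ℕ} {M : Type*} [Monoid M] (T : Fin n → M)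
    (α : List (Fin n)) : M :=
  (α.map T).prod

/-!
Put `Q = 1 - p(S)`, whose real part is positive, and for `k ≥ 1` let `V = ∑_{|α|=k} v_α S_α` with
`∑ |v_α|² = 1`. Then `V` is an isometry, and the vectors `Vⁱ e_{g₀}` are homogeneous of degree
`i * k`. Hence the form `⟨x, Q y⟩` restricted to this orbit is an accretive lower triangular
Toeplitz matrix of bandwidth `N = ⌊(m-1)/k⌋`, with diagonal entry `1 - a_{g₀}` and subdiagonal
entry `-∑ conj(v_α) a_α`. Its finite sections give polynomials of degree at most `N` with
nonnegative real part on the unit circle, so Fejér's inequality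
`‖c₁‖ ≤ 2 Re c₀ cos(π / (N + 2))` applies; choosing `v` proportional to `-(a_α)` bounds the `ℓ²`
norm of the coefficients of degree `k`.
Fejér's inequality is a quadrature: at the `(N+2)`-th roots of `-1` the weights
`2 (cos(π/(N+2)) - cos θ)` are nonnegative and annihilate every degree from `2` to `N`.
Finally, the Cauchy-Schwarz inequality for rows over a C⋆-algebra gives
`‖∑_{|α|=k} |a_α| T_α‖ ≤ (∑ |a_α|²)^{1/2} t^k`.
-/

open scoped ComplexConjugate

/-- The `(N + 2)`-th roots of `-1`, the nodes of Fejér's quadrature for polynomials of degree at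
most `N`; all of them occur as `s` runs over `range (N + 2)`. -/
noncomputable def fejerNode (N s : ℕ) : ℂ :=
  Complex.exp (((2 * s + 1 : ℝ) * (Real.pi / ((N + 2 : ℕ) : ℝ)) : ℝ) * Complex.I)

/-- The weight of Fejér's quadrature at `fejerNode N s`: the value of a trigonometric polynomial of
degree one that vanishes at the two nodes nearest to `1`. The weights are not normalized. -/
noncomputable def fejerWeight (N s : ℕ) : ℝ :=
  2 * (Real.cos (Real.pi / ((N + 2 : ℕ) : ℝ)) -
    Real.cos ((2 * s + 1) * (Real.pi / ((N + 2 : ℕ) : ℝ))))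

theorem norm_fejerNode (N s : ℕ) : ‖fejerNode N s‖ = 1 :=
  Complex.norm_exp_ofReal_mul_I _

theorem fejerWeight_nonneg {N s : ℕ} (hs : s < N + 2) : 0 ≤ fejerWeight N s := by
  set φ := Real.pi / ((N + 2 : ℕ) : ℝ) with hφ
  have hφ_pos : 0 < φ := by positivity
  have hNφ : ((N : ℝ) + 2) * φ = Real.pi := by rw [hφ]; push_cast; field_simp
  have hs_le : (s : ℝ) ≤ N + 1 := by exact_mod_cast Nat.lt_succ_iff.mp hs
  have hlower : φ ≤ (2 * s + 1) * φ := le_mul_of_one_le_left hφ_pos.le (by simp)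
  have hupper : (2 * s + 1) * φ ≤ 2 * Real.pi - φ := by nlinarith
  suffices Real.cos ((2 * s + 1) * φ) ≤ Real.cos φ by
    simpa only [fejerWeight, ← hφ] using mul_nonneg zero_le_two (sub_nonneg.mpr this)
  rcases le_total ((2 * s + 1) * φ) Real.pi with hle | hge
  · exact Real.cos_le_cos_of_nonneg_of_le_pi hφ_pos.le hle hlower
  · rw [← Real.cos_two_pi_sub]
    exact Real.cos_le_cos_of_nonneg_of_le_pi hφ_pos.le (by linarith) (by linarith)

theorem fejerWeight_eq (N s : ℕ) :
    (fejerWeight N s : ℂ) =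
      2 * Real.cos (Real.pi / ((N + 2 : ℕ) : ℝ)) - fejerNode N s - (fejerNode N s)⁻¹ := by
  rw [fejerWeight, fejerNode, ← Complex.exp_neg]
  generalize (2 * (s : ℝ) + 1) * (Real.pi / ((N + 2 : ℕ) : ℝ)) = θ
  push_cast [Complex.cos.eq_def (θ : ℂ)]
  ring_nf

theorem sum_fejerNode_zpow {N : ℕ} {e : ℤ} (he : |e| < N + 2) :
    ∑ s ∈ Finset.range (N + 2), fejerNode N s ^ e = if e = 0 then (N + 2 : ℂ) else 0 := by
  split_ifs with he_zero
  · simp [he_zero]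
  set ω := Complex.exp (2 * Real.pi * Complex.I / ((N + 2 : ℕ) : ℂ)) with hω
  have hprim : IsPrimitiveRoot ω (N + 2) := Complex.isPrimitiveRoot_exp _ (by omega)
  have hnode (s : ℕ) : fejerNode N s = fejerNode N 0 * ω ^ s := by
    rw [fejerNode, fejerNode, hω, ← Complex.exp_nat_mul, ← Complex.exp_add]
    push_cast
    ring_nf
  have hpow (s : ℕ) : fejerNode N s ^ e = fejerNode N 0 ^ e * (ω ^ e) ^ s := by
    rw [hnode, mul_zpow, ← zpow_natCast, ← zpow_natCast, zpow_comm]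
  have hne : ω ^ e ≠ 1 := fun h =>
    he_zero (Int.eq_zero_of_abs_lt_dvd ((hprim.zpow_eq_one_iff_dvd e).mp h) (by exact_mod_cast he))
  have hone : (ω ^ e) ^ (N + 2) = 1 := by
    rw [← zpow_natCast, zpow_comm, zpow_natCast, hprim.pow_eq_one, one_zpow]
  rw [Finset.sum_congr rfl fun s _ => hpow s, ← Finset.mul_sum, geom_sum_eq hne, hone, sub_self,
    zero_div, mul_zero]

theorem sum_fejerWeight_mul_pow {N d : ℕ} (hd : d ≤ N) :
    ∑ s ∈ Finset.range (N + 2), (fejerWeight N s : ℂ) * fejerNode N s ^ d =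
      (N + 2) * ((if d = 0 then 2 * (Real.cos (Real.pi / ((N + 2 : ℕ) : ℝ)) : ℂ) else 0) -
        if d = 1 then 1 else 0) := by
  have hterm (s : ℕ) : (fejerWeight N s : ℂ) * fejerNode N s ^ d =
      2 * Real.cos (Real.pi / ((N + 2 : ℕ) : ℝ)) * fejerNode N s ^ (d : ℤ) -
        fejerNode N s ^ (d + 1 : ℤ) - fejerNode N s ^ (d - 1 : ℤ) := by
    have hne : fejerNode N s ≠ 0 := Complex.exp_ne_zero _
    rw [fejerWeight_eq, zpow_add_one₀ hne, zpow_sub_one₀ hne, zpow_natCast]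
    ring
  simp_rw [hterm, Finset.sum_sub_distrib, ← Finset.mul_sum]
  rw [sum_fejerNode_zpow (by rw [abs_lt]; omega), sum_fejerNode_zpow (by rw [abs_lt]; omega),
    sum_fejerNode_zpow (by rw [abs_lt]; omega), if_neg (by omega : (d + 1 : ℤ) ≠ 0)]
  simp only [Nat.cast_eq_zero, sub_eq_zero, Nat.cast_eq_one]
  split_ifs <;> ring

theorem sum_fejerWeight_mul_eval {N : ℕ} {f : Polynomial ℂ} (hf : f.natDegree ≤ N) :
    ∑ s ∈ Finset.range (N + 2), (fejerWeight N s : ℂ) * f.eval (fejerNode N s) =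
      (N + 2) * (2 * Real.cos (Real.pi / ((N + 2 : ℕ) : ℝ)) * f.coeff 0 - f.coeff 1) := by
  have hcoeff_one : N + 1 ≤ 1 → f.coeff 1 = 0 := fun h =>
    Polynomial.coeff_eq_zero_of_natDegree_lt (by omega)
  calc ∑ s ∈ Finset.range (N + 2), (fejerWeight N s : ℂ) * f.eval (fejerNode N s)
    _ = ∑ d ∈ Finset.range (N + 1), f.coeff d *
          ∑ s ∈ Finset.range (N + 2), (fejerWeight N s : ℂ) * fejerNode N s ^ d := by
        simp_rw [Polynomial.eval_eq_sum_range' (Nat.lt_succ_of_le hf), Finset.mul_sum]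
        rw [Finset.sum_comm]
        simp only [mul_left_comm]
    _ = ∑ d ∈ Finset.range (N + 1), f.coeff d * ((N + 2) *
          ((if d = 0 then 2 * (Real.cos (Real.pi / ((N + 2 : ℕ) : ℝ)) : ℂ) else 0) -
            if d = 1 then 1 else 0)) :=
        Finset.sum_congr rfl fun d hd => by
          rw [sum_fejerWeight_mul_pow (Nat.lt_succ_iff.mp (Finset.mem_range.mp hd))]
    _ = _ := by
        simp only [mul_sub, mul_ite, mul_zero, mul_one, Finset.sum_sub_distrib,
          Finset.sum_ite_eq', Finset.mem_range]
        split_ifs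
        · ring
        · rw [hcoeff_one (by omega)]; ring
        · omega
        · omega

theorem re_coeff_one_le_of_re_eval_nonneg {N : ℕ} {f : Polynomial ℂ} (hdeg : f.natDegree ≤ N)
    (hf : ∀ z : ℂ, ‖z‖ = 1 → 0 ≤ (f.eval z).re) :
    (f.coeff 1).re ≤ 2 * (f.coeff 0).re * Real.cos (Real.pi / ((N + 2 : ℕ) : ℝ)) := by
  have hsum : 0 ≤ (∑ s ∈ Finset.range (N + 2),
      (fejerWeight N s : ℂ) * f.eval (fejerNode N s)).re := by
    rw [Complex.re_sum]
    refine Finset.sum_nonneg fun s hs => ?_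
    rw [Complex.re_ofReal_mul]
    exact mul_nonneg (fejerWeight_nonneg (Finset.mem_range.mp hs)) (hf _ (norm_fejerNode N s))
  have hre : (∑ s ∈ Finset.range (N + 2),
      (fejerWeight N s : ℂ) * f.eval (fejerNode N s)).re = ((N : ℝ) + 2) *
        (2 * Real.cos (Real.pi / ((N + 2 : ℕ) : ℝ)) * (f.coeff 0).re - (f.coeff 1).re) := by
    rw [sum_fejerWeight_mul_eval hdeg,
      show (N + 2 : ℂ) = ((N + 2 : ℝ) : ℂ) by push_cast; rfl, Complex.re_ofReal_mul,
      Complex.sub_re, mul_assoc 2, ← Complex.ofReal_ofNat, Complex.re_ofReal_mul,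
      Complex.re_ofReal_mul, mul_assoc]
  rw [hre] at hsum
  linarith [nonneg_of_mul_nonneg_right hsum (by positivity)]

theorem norm_coeff_one_le_of_re_eval_nonneg {N : ℕ} {f : Polynomial ℂ} (hdeg : f.natDegree ≤ N)
    (hf : ∀ z : ℂ, ‖z‖ = 1 → 0 ≤ (f.eval z).re) :
    ‖f.coeff 1‖ ≤ 2 * (f.coeff 0).re * Real.cos (Real.pi / ((N + 2 : ℕ) : ℝ)) := by
  obtain ⟨u, hu, hu_mul⟩ := Complex.exists_norm_eq_mul_self (f.coeff 1)
  have hdeg_rot : (f.comp (.C u * .X)).natDegree ≤ N :=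
    (Polynomial.natDegree_comp_le.trans (mul_le_of_le_one_right' (by compute_degree))).trans hdeg
  have hrot := re_coeff_one_le_of_re_eval_nonneg hdeg_rot fun z hz => by
    simpa using hf (u * z) (by rw [norm_mul, hu, hz, one_mul])
  rwa [Polynomial.comp_C_mul_X_coeff, Polynomial.comp_C_mul_X_coeff, pow_one, pow_zero, mul_one,
    mul_comm, ← hu_mul, Complex.ofReal_re] at hrot

/-- The polynomial `∑ B i j z ^ (i - j)` attached to the first `M` rows and columns of a lower
triangular matrix `B`; on the unit circle it is the quadratic form of `B` at `(z⁻ʲ)_{j < M}`. The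
subtraction in the exponent truncates above the diagonal, where `B` is meant to vanish. -/
noncomputable def bandPolynomial (B : ℕ → ℕ → ℂ) (M : ℕ) : Polynomial ℂ :=
  ∑ j ∈ Finset.range M, ∑ i ∈ Finset.range M, Polynomial.monomial (i - j) (B i j)

section BandMatrices

variable {B : ℕ → ℕ → ℂ} {N : ℕ}

theorem natDegree_bandPolynomial_le (hband : ∀ i j, j + N < i → B i j = 0) (M : ℕ) :
    (bandPolynomial B M).natDegree ≤ N := by
  refine Polynomial.natDegree_sum_le_of_forall_le _ _ fun j _ =>
    Polynomial.natDegree_sum_le_of_forall_le _ _ fun i _ => ?_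
  rcases lt_or_ge (j + N) i with hfar | hnear
  · simp [hband i j hfar]
  · exact (Polynomial.natDegree_monomial_le _).trans (by omega)

theorem eval_bandPolynomial (hlow : ∀ i j, i < j → B i j = 0) (M : ℕ) {z : ℂ} (hz : ‖z‖ = 1) :
    (bandPolynomial B M).eval z =
      ∑ j ∈ Finset.range M, ∑ i ∈ Finset.range M, conj (z ^ j) * z ^ i * B i j := by
  simp only [bandPolynomial, Polynomial.eval_finsetSum, Polynomial.eval_monomial]
  refine Finset.sum_congr rfl fun j _ => Finset.sum_congr rfl fun i _ => ?_
  rcases lt_or_ge i j with hlt | hge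
  · simp [hlow i j hlt]
  · obtain ⟨d, rfl⟩ := Nat.exists_eq_add_of_le hge
    have hunit : conj (z ^ j) * z ^ j = 1 := by
      rw [Complex.conj_mul', norm_pow, hz]
      simp
    rw [Nat.add_sub_cancel_left, pow_add, ← mul_assoc, hunit, one_mul, mul_comm]

theorem coeff_zero_bandPolynomial (hlow : ∀ i j, i < j → B i j = 0) (M : ℕ) :
    (bandPolynomial B M).coeff 0 = ∑ j ∈ Finset.range M, B j j := by
  simp only [bandPolynomial, Polynomial.finsetSum_coeff, Polynomial.coeff_monomial]
  refine Finset.sum_congr rfl fun j hj => ?_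
  rw [Finset.sum_eq_single_of_mem j hj fun i _ hne => ?_, if_pos (Nat.sub_self j)]
  rcases hne.lt_or_gt with hlt | hgt
  · simp [hlow i j hlt]
  · rw [if_neg (by omega)]

theorem coeff_one_bandPolynomial (M : ℕ) :
    (bandPolynomial B (M + 1)).coeff 1 = ∑ j ∈ Finset.range M, B (j + 1) j := by
  have hcolumn (j i : ℕ) : (Polynomial.monomial (i - j) (B i j)).coeff 1 =
      if i = j + 1 then B (j + 1) j else 0 := by
    rw [Polynomial.coeff_monomial]
    split_ifs <;> first | omega | simp_all
  simp only [bandPolynomial, Polynomial.finsetSum_coeff, hcolumn, Finset.sum_ite_eq',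
    Finset.mem_range, Nat.add_lt_add_iff_right]
  rw [Finset.sum_range_succ, if_neg (lt_irrefl M), add_zero]
  exact Finset.sum_congr rfl fun j hj => if_pos (Finset.mem_range.mp hj)

end BandMatrices

theorem le_of_forall_nat_mul_le_succ_mul {R : Type*} [Field R] [LinearOrder R]
    [IsStrictOrderedRing R] [Archimedean R] {x y : R} (h : ∀ M : ℕ, M * x ≤ (M + 1) * y) :
    x ≤ y := by
  by_contra! hlt
  obtain ⟨M, hM⟩ := exists_nat_gt (y / (x - y))
  rw [div_lt_iff₀ (sub_pos.mpr hlt)] at hM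
  linarith [h M]

theorem norm_subdiagonal_le_of_re_inner_nonneg {E : Type*} [NormedAddCommGroup E]
    [InnerProductSpace ℂ E] {Q : E →ₗ[ℂ] E} (hQ : ∀ x, 0 ≤ (inner ℂ x (Q x)).re)
    {ξ : ℕ → E} {N : ℕ} {c g : ℂ} (hdiag : ∀ i, inner ℂ (ξ i) (Q (ξ i)) = c)
    (hsub : ∀ i, inner ℂ (ξ (i + 1)) (Q (ξ i)) = g)
    (hlow : ∀ i j, i < j → inner ℂ (ξ i) (Q (ξ j)) = 0)
    (hband : ∀ i j, j + N < i → inner ℂ (ξ i) (Q (ξ j)) = 0) :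
    ‖g‖ ≤ 2 * c.re * Real.cos (Real.pi / ((N + 2 : ℕ) : ℝ)) := by
  let B : ℕ → ℕ → ℂ := fun i j => inner ℂ (ξ i) (Q (ξ j))
  refine le_of_forall_nat_mul_le_succ_mul fun M => ?_
  have heval (z : ℂ) (hz : ‖z‖ = 1) : 0 ≤ ((bandPolynomial B (M + 1)).eval z).re := by
    rw [eval_bandPolynomial hlow _ hz]
    convert hQ (∑ i ∈ Finset.range (M + 1), conj (z ^ i) • ξ i) using 2
    simp only [map_sum, map_smul, inner_sum, sum_inner, inner_smul_left, inner_smul_right,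
      Finset.mul_sum, Complex.conj_conj, mul_assoc]
  have hcoeff := norm_coeff_one_le_of_re_eval_nonneg
    (natDegree_bandPolynomial_le hband (M + 1)) heval
  have hcoeff_zero : ((bandPolynomial B (M + 1)).coeff 0).re = (M + 1) * c.re := by
    simp [coeff_zero_bandPolynomial hlow, B, hdiag]
  have hcoeff_one : ‖(bandPolynomial B (M + 1)).coeff 1‖ = M * ‖g‖ := by
    simp [coeff_one_bandPolynomial, B, hsub]
  rw [hcoeff_zero, hcoeff_one] at hcoeff
  linarith

section Words

variable {n : ℕ}

theorem wordProd_nil {M : Type*} [Monoid M] (T : Fin n → M) : wordProd T [] = 1 := rfl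

theorem wordProd_cons {M : Type*} [Monoid M] (T : Fin n → M) (i : Fin n)
    (α : List (Fin n)) : wordProd T (i :: α) = T i * wordProd T α := by
  simp [wordProd]

theorem wordProd_append {M : Type*} [Monoid M] (T : Fin n → M) (α β : List (Fin n)) :
    wordProd T (α ++ β) = wordProd T α * wordProd T β := by
  simp [wordProd]

/-- The homogeneous part of degree `k` of the noncommutative power series `∑ a_α T_α`; words of
length `k` are encoded as functions `Fin k → Fin n`. -/
noncomputable def homogPart {A : Type*} [Semiring A] [Module ℂ A]
    (a : List (Fin n) → ℂ) (T : Fin n → A) (k : ℕ) : A :=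
  ∑ w : Fin k → Fin n, a (List.ofFn w) • wordProd T (List.ofFn w)

theorem homogPart_zero {A : Type*} [Semiring A] [Module ℂ A]
    (a : List (Fin n) → ℂ) (T : Fin n → A) : homogPart a T 0 = a [] • 1 := by
  simp [homogPart, wordProd_nil]

theorem homogPart_sub {A : Type*} [Ring A] [Module ℂ A] (a b : List (Fin n) → ℂ)
    (T : Fin n → A) (k : ℕ) : homogPart (a - b) T k = homogPart a T k - homogPart b T k := by
  simp [homogPart, sub_smul]

theorem homogPart_single_nil {A : Type*} [Semiring A] [Module ℂ A] (T : Fin n → A)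
    (k : ℕ) : homogPart (Pi.single [] 1) T k = if k = 0 then 1 else 0 := by
  rcases k with _ | k <;> simp [homogPart, wordProd_nil]

theorem one_sub_sum_homogPart {A : Type*} [Ring A] [Module ℂ A] {m : ℕ} (hm : 0 < m)
    (a : List (Fin n) → ℂ) (T : Fin n → A) :
    1 - ∑ k ∈ Finset.range m, homogPart a T k =
      ∑ k ∈ Finset.range m, homogPart (Pi.single [] 1 - a) T k := by
  simp [homogPart_sub, homogPart_single_nil, hm]

end Words

theorem norm_one_le_one_of_cstarRing {A : Type*} [NormedRing A] [StarRing A] [CStarRing A] :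
    ‖(1 : A)‖ ≤ 1 := by
  rcases subsingleton_or_nontrivial A with _ | _
  · simp [Subsingleton.elim (1 : A) 0]
  · exact CStarRing.norm_one.le

section CStarAlgebraRows

variable {A : Type*} [CStarAlgebra A] [PartialOrder A] [StarOrderedRing A] {n : ℕ}

theorem norm_sum_wordProd_mul_star_le (T : Fin n → A) (k : ℕ) :
    ‖∑ w : Fin k → Fin n, wordProd T (List.ofFn w) * star (wordProd T (List.ofFn w))‖ ≤
      ‖∑ i, T i * star (T i)‖ ^ k := by
  induction k with
  | zero => simpa [wordProd_nil] using norm_one_le_one_of_cstarRing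
  | succ k ih =>
    set G : A := ∑ w : Fin k → Fin n, wordProd T (List.ofFn w) * star (wordProd T (List.ofFn w))
    have hG : 0 ≤ G := Finset.sum_nonneg fun w _ => mul_star_self_nonneg _
    have hsplit : ∑ w : Fin (k + 1) → Fin n,
        wordProd T (List.ofFn w) * star (wordProd T (List.ofFn w)) =
          ∑ i, T i * G * star (T i) := by
      rw [← (Fin.consEquiv fun _ => Fin n).sum_comp, Fintype.sum_prod_type]
      simp [Fin.consEquiv, wordProd_cons, G, Finset.mul_sum, Finset.sum_mul, mul_assoc]
    have hle : ∑ i, T i * G * star (T i) ≤ ‖G‖ • ∑ i, T i * star (T i) := by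
      rw [Finset.smul_sum]
      exact Finset.sum_le_sum fun i _ =>
        CStarAlgebra.star_right_conjugate_le_norm_smul hG.isSelfAdjoint
    calc _ ≤ ‖‖G‖ • ∑ i, T i * star (T i)‖ := by
          rw [hsplit]
          exact CStarAlgebra.norm_le_norm_of_nonneg_of_le
            (Finset.sum_nonneg fun i _ => star_right_conjugate_nonneg hG _) hle
      _ = ‖G‖ * ‖∑ i, T i * star (T i)‖ := by rw [norm_smul, norm_norm]
      _ ≤ ‖∑ i, T i * star (T i)‖ ^ (k + 1) := by
          rw [pow_succ]
          gcongr

theorem norm_sum_smul_le_sqrt_mul_sqrt {ι : Type*} [Fintype ι] (b : ι → ℂ) (x : ι → A) :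
    ‖∑ i, b i • x i‖ ≤ √(∑ i, ‖b i‖ ^ 2) * √‖∑ i, x i * star (x i)‖ := by
  let u : WithCStarModule A (ι → A) :=
    (WithCStarModule.equiv A (ι → A)).symm fun i => star (b i) • 1
  let v : WithCStarModule A (ι → A) := (WithCStarModule.equiv A (ι → A)).symm x
  have hinner : inner A u v = ∑ i, b i • x i := by
    simp [u, v, WithCStarModule.pi_inner, WithCStarModule.inner_def]
  have hgram : ∑ i, inner A (u i) (u i) = ((∑ i, ‖b i‖ ^ 2 : ℝ) : ℂ) • (1 : A) := by
    push_cast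
    simp [u, WithCStarModule.inner_def, Finset.sum_smul, smul_smul, Complex.mul_conj']
  have hu : ‖u‖ ≤ √(∑ i, ‖b i‖ ^ 2) := by
    rw [WithCStarModule.pi_norm, hgram]
    refine Real.sqrt_le_sqrt ((norm_smul_le _ _).trans ?_)
    rw [Complex.norm_real, Real.norm_of_nonneg (by positivity)]
    exact mul_le_of_le_one_right (by positivity) norm_one_le_one_of_cstarRing
  have hv : ‖v‖ = √‖∑ i, x i * star (x i)‖ := WithCStarModule.pi_norm v
  rw [← hinner, ← hv]
  exact (CStarModule.norm_inner_le _).trans (by gcongr)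

theorem norm_homogPart_le (b : List (Fin n) → ℂ) (T : Fin n → A) (k : ℕ) :
    ‖homogPart b T k‖ ≤
      √(∑ w : Fin k → Fin n, ‖b (List.ofFn w)‖ ^ 2) * √‖∑ i, T i * star (T i)‖ ^ k := by
  refine (norm_sum_smul_le_sqrt_mul_sqrt _ _).trans ?_
  gcongr
  rw [Real.sqrt_le_left (by positivity), ← pow_mul, mul_comm, pow_mul,
    Real.sq_sqrt (norm_nonneg _)]
  exact norm_sum_wordProd_mul_star_le T k

end CStarAlgebraRows

section FockRepresentation

variable {n : ℕ}

theorem star_wordProd_mul_wordProd {R : Type*} [MonoidWithZero R] [StarMul R] {S : Fin n → R}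
    (hS : ∀ i j, star (S i) * S j = if i = j then 1 else 0) :
    ∀ {α β : List (Fin n)}, α.length = β.length →
      star (wordProd S α) * wordProd S β = if α = β then 1 else 0
  | [], [], _ => by simp [wordProd_nil]
  | i :: α, j :: β, hlen => by
    have ih := star_wordProd_mul_wordProd hS (Nat.succ.inj hlen)
    rw [wordProd_cons, wordProd_cons, star_mul, mul_assoc, ← mul_assoc (star (S i)), hS]
    by_cases hij : i = j <;> simp [hij, ih]

theorem star_homogPart_mul_homogPart {R : Type*} [Semiring R] [StarRing R] [Algebra ℂ R]
    [StarModule ℂ R] {S : Fin n → R}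
    (hS : ∀ i j, star (S i) * S j = if i = j then 1 else 0) (a b : List (Fin n) → ℂ) (k : ℕ) :
    star (homogPart a S k) * homogPart b S k =
      (∑ w : Fin k → Fin n, conj (a (List.ofFn w)) * b (List.ofFn w)) • 1 := by
  have hwords (v w : Fin k → Fin n) :
      star (wordProd S (List.ofFn v)) * wordProd S (List.ofFn w) = if v = w then 1 else 0 := by
    simp [star_wordProd_mul_wordProd hS, List.ofFn_injective.eq_iff]
  simp [homogPart, Finset.sum_mul_sum, hwords, smul_smul, Finset.sum_smul, mul_comm]

variable {H : Type*} [NormedAddCommGroup H] [InnerProductSpace ℂ H]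

/-- The vectors of degree `d`: the span of the vectors `S_α Ω` over the words `α` of length `d`. -/
def wordSpace (S : Fin n → H →L[ℂ] H) (Ω : H) (d : ℕ) : Submodule ℂ H :=
  Submodule.span ℂ ((fun α => wordProd S α Ω) '' {α | α.length = d})

theorem vacuum_mem_wordSpace (S : Fin n → H →L[ℂ] H) (Ω : H) : Ω ∈ wordSpace S Ω 0 :=
  Submodule.subset_span ⟨[], rfl, rfl⟩

theorem homogPart_apply_mem_wordSpace {S : Fin n → H →L[ℂ] H} {Ω x : H} {d : ℕ}
    (hx : x ∈ wordSpace S Ω d) (a : List (Fin n) → ℂ) (k : ℕ) :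
    homogPart a S k x ∈ wordSpace S Ω (d + k) := by
  suffices wordSpace S Ω d ≤ (wordSpace S Ω (d + k)).comap (homogPart a S k).toLinearMap from
    this hx
  refine Submodule.span_le.mpr ?_
  rintro _ ⟨α, rfl, rfl⟩
  simp only [SetLike.mem_coe, Submodule.mem_comap, ContinuousLinearMap.coe_coe, homogPart,
    sum_apply, smul_apply]
  refine Submodule.sum_mem _ fun w _ => Submodule.smul_mem _ _ (Submodule.subset_span ?_)
  exact ⟨List.ofFn w ++ α, by simp [add_comm], by simp [wordProd_append]⟩

theorem homogPart_pow_apply_vacuum_mem_wordSpace (S : Fin n → H →L[ℂ] H) (Ω : H)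
    (v : List (Fin n) → ℂ) (k i : ℕ) : (homogPart v S k ^ i) Ω ∈ wordSpace S Ω (i * k) := by
  induction i with
  | zero => simpa using vacuum_mem_wordSpace S Ω
  | succ i ih =>
    rw [pow_succ', mul_apply_eq_comp, add_one_mul]
    exact homogPart_apply_mem_wordSpace ih v k

variable [CompleteSpace H]

/-- Isometries with pairwise orthogonal ranges together with a unit vector orthogonal to all these
ranges, such as the left creation operators with the vacuum vector `e_{g₀}`. -/
structure IsVacuumRowIsometry (S : Fin n → H →L[ℂ] H) (Ω : H) : Prop where
  star_mul_eq : ∀ i j, star (S i) * S j = if i = j then 1 else 0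
  star_apply_vacuum : ∀ i, star (S i) Ω = 0
  norm_vacuum : ‖Ω‖ = 1

theorem inner_apply_apply_eq_inner_star_mul (A B : H →L[ℂ] H) (x y : H) :
    inner ℂ (A x) (B y) = inner ℂ x ((star A * B) y) :=
  (ContinuousLinearMap.adjoint_inner_right A x (B y)).symm

theorem re_inner_one_sub_apply_nonneg {p : H →L[ℂ] H}
    (hre : (2 : ℂ)⁻¹ • (p + ContinuousLinearMap.adjoint p) ≤ 1) (x : H) :
    0 ≤ (inner ℂ x ((1 - p) x)).re := by
  have hpos := ((ContinuousLinearMap.le_def _ _).mp hre).re_inner_nonneg_right x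
  have hre_adjoint : (inner ℂ x (ContinuousLinearMap.adjoint p x)).re = (inner ℂ x (p x)).re := by
    rw [ContinuousLinearMap.adjoint_inner_right, ← inner_conj_symm, Complex.conj_re]
  have hre_half : (inner ℂ x (((2 : ℂ)⁻¹ • (p + ContinuousLinearMap.adjoint p)) x)).re =
      (inner ℂ x (p x)).re := by
    rw [smul_apply, add_apply, inner_smul_right, inner_add_right, ← Complex.ofReal_ofNat,
      ← Complex.ofReal_inv, Complex.re_ofReal_mul, Complex.add_re, hre_adjoint]
    ring
  rwa [sub_apply, inner_sub_right, map_sub, RCLike.re_to_complex, RCLike.re_to_complex, hre_half,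
    ← Complex.sub_re, ← inner_sub_right, ← sub_apply] at hpos

namespace IsVacuumRowIsometry

variable {S : Fin n → H →L[ℂ] H} {Ω : H} (h : IsVacuumRowIsometry S Ω)
include h

theorem inner_vacuum_apply (i : Fin n) (x : H) : inner ℂ Ω (S i x) = 0 := by
  rw [← ContinuousLinearMap.adjoint_inner_left, ← ContinuousLinearMap.star_eq_adjoint,
    h.star_apply_vacuum, inner_zero_left]

theorem inner_wordProd_vacuum : ∀ {α β : List (Fin n)}, α ≠ β →
    inner ℂ (wordProd S α Ω) (wordProd S β Ω) = 0
  | [], [], hne => absurd rfl hne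
  | [], j :: β, _ => by simp [wordProd_nil, wordProd_cons, h.inner_vacuum_apply]
  | i :: α, [], _ => by
    rw [inner_eq_zero_symm]
    simp [wordProd_nil, wordProd_cons, h.inner_vacuum_apply]
  | i :: α, j :: β, hne => by
    rw [wordProd_cons, wordProd_cons, mul_apply_eq_comp,
      mul_apply_eq_comp, inner_apply_apply_eq_inner_star_mul, h.star_mul_eq]
    split_ifs with hij
    · subst hij
      exact inner_wordProd_vacuum (fun heq => hne (heq ▸ rfl))
    · simp

theorem isOrtho_wordSpace {d e : ℕ} (hde : d ≠ e) : wordSpace S Ω d ⟂ wordSpace S Ω e := by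
  rw [wordSpace, wordSpace, Submodule.isOrtho_span]
  rintro _ ⟨α, rfl, rfl⟩ _ ⟨β, rfl, rfl⟩
  exact h.inner_wordProd_vacuum (ne_of_apply_ne List.length hde)

theorem inner_sum_homogPart_eq_zero {b : List (Fin n) → ℂ} {d e m : ℕ} {x y : H}
    (hx : x ∈ wordSpace S Ω d) (hy : y ∈ wordSpace S Ω e) (hde : ∀ r < m, d + r ≠ e) :
    inner ℂ y ((∑ r ∈ Finset.range m, homogPart b S r) x) = 0 := by
  rw [sum_apply, inner_sum]
  exact Finset.sum_eq_zero fun r hr => (h.isOrtho_wordSpace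
    (hde r (Finset.mem_range.mp hr)).symm).inner_eq hy (homogPart_apply_mem_wordSpace hx b r)

theorem inner_sum_homogPart {b : List (Fin n) → ℂ} {d k m : ℕ} {x y : H}
    (hx : x ∈ wordSpace S Ω d) (hy : y ∈ wordSpace S Ω (d + k)) (hk : k < m) :
    inner ℂ y ((∑ r ∈ Finset.range m, homogPart b S r) x) = inner ℂ y (homogPart b S k x) := by
  rw [sum_apply, inner_sum]
  exact Finset.sum_eq_single_of_mem k (Finset.mem_range.mpr hk) fun r _ hr =>
    (h.isOrtho_wordSpace (by omega)).inner_eq hy (homogPart_apply_mem_wordSpace hx b r)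

theorem inner_homogPart_apply (a b : List (Fin n) → ℂ) (k : ℕ) (x y : H) :
    inner ℂ (homogPart a S k x) (homogPart b S k y) =
      (∑ w : Fin k → Fin n, conj (a (List.ofFn w)) * b (List.ofFn w)) * inner ℂ x y := by
  rw [inner_apply_apply_eq_inner_star_mul, star_homogPart_mul_homogPart h.star_mul_eq,
    smul_apply, inner_smul_right, one_apply_eq_self]

theorem inner_sum_homogPart_same {b : List (Fin n) → ℂ} {d m : ℕ} {x y : H}
    (hx : x ∈ wordSpace S Ω d) (hy : y ∈ wordSpace S Ω d) (hm : 0 < m) :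
    inner ℂ y ((∑ r ∈ Finset.range m, homogPart b S r) x) = b [] * inner ℂ y x := by
  rw [h.inner_sum_homogPart (k := 0) hx hy hm, homogPart_zero, smul_apply, one_apply_eq_self,
    inner_smul_right]

theorem inner_homogPart_pow_apply_vacuum {v : List (Fin n) → ℂ} {k : ℕ}
    (hv : ∑ w : Fin k → Fin n, ‖v (List.ofFn w)‖ ^ 2 = 1) (i : ℕ) :
    inner ℂ ((homogPart v S k ^ i) Ω) ((homogPart v S k ^ i) Ω) = (1 : ℂ) := by
  induction i with
  | zero => simp [inner_self_eq_norm_sq_to_K, h.norm_vacuum]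
  | succ i ih =>
    rw [pow_succ', mul_apply_eq_comp, h.inner_homogPart_apply, ih, mul_one]
    simp only [Complex.conj_mul']
    exact_mod_cast hv

theorem norm_sum_conj_mul_coeff_le {b v : List (Fin n) → ℂ} {m k : ℕ} (hk : 1 ≤ k) (hkm : k < m)
    (hQ : ∀ x, 0 ≤ (inner ℂ x ((∑ r ∈ Finset.range m, homogPart b S r) x)).re)
    (hv : ∑ w : Fin k → Fin n, ‖v (List.ofFn w)‖ ^ 2 = 1) :
    ‖∑ w : Fin k → Fin n, conj (v (List.ofFn w)) * b (List.ofFn w)‖ ≤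
      2 * (b []).re * Real.cos (Real.pi / (((m - 1) / k + 2 : ℕ) : ℝ)) := by
  have hmem := homogPart_pow_apply_vacuum_mem_wordSpace S Ω v k
  have hunit := h.inner_homogPart_pow_apply_vacuum hv
  refine norm_subdiagonal_le_of_re_inner_nonneg (N := (m - 1) / k)
    (ξ := fun i => (homogPart v S k ^ i) Ω)
    (Q := (∑ r ∈ Finset.range m, homogPart b S r).toLinearMap) hQ
    (fun i => ?diagonal) (fun i => ?subdiagonal) (fun i j hij => ?above) (fun i j hij => ?below)
  case diagonal =>
    rw [ContinuousLinearMap.coe_coe,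
      h.inner_sum_homogPart_same (hmem i) (hmem i) (Nat.zero_lt_of_lt hkm), hunit, mul_one]
  case subdiagonal =>
    have hmem_succ : (homogPart v S k ^ (i + 1)) Ω ∈ wordSpace S Ω (i * k + k) := by
      rw [← add_one_mul]
      exact hmem (i + 1)
    rw [ContinuousLinearMap.coe_coe, h.inner_sum_homogPart (hmem i) hmem_succ hkm, pow_succ',
      mul_apply_eq_comp, h.inner_homogPart_apply, hunit, mul_one]
  case above =>
    have hdeg : i * k < j * k := Nat.mul_lt_mul_of_pos_right hij hk
    exact h.inner_sum_homogPart_eq_zero (hmem j) (hmem i) fun r _ => by omega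
  case below =>
    have hdeg : j * k + m ≤ i * k := by
      have hdiv : m - 1 < (i - j) * k := by
        rw [← Nat.div_lt_iff_lt_mul hk]
        omega
      rw [Nat.sub_mul] at hdiv
      omega
    exact h.inner_sum_homogPart_eq_zero (hmem j) (hmem i) fun r hr => by omega

theorem re_coeff_nil_nonneg {b : List (Fin n) → ℂ} {m : ℕ} (hm : 0 < m)
    (hQ : ∀ x, 0 ≤ (inner ℂ x ((∑ r ∈ Finset.range m, homogPart b S r) x)).re) :
    0 ≤ (b []).re := by
  have hΩ := vacuum_mem_wordSpace S Ω
  have hvacuum := hQ Ω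
  rwa [h.inner_sum_homogPart_same hΩ hΩ hm, inner_self_eq_norm_sq_to_K, h.norm_vacuum,
    RCLike.ofReal_one, one_pow, mul_one] at hvacuum

theorem sqrt_sum_sq_norm_coeff_le {b : List (Fin n) → ℂ} {m k : ℕ} (hk : 1 ≤ k) (hkm : k < m)
    (hQ : ∀ x, 0 ≤ (inner ℂ x ((∑ r ∈ Finset.range m, homogPart b S r) x)).re) :
    √(∑ w : Fin k → Fin n, ‖b (List.ofFn w)‖ ^ 2) ≤
      2 * (b []).re * Real.cos (Real.pi / (((m - 1) / k + 2 : ℕ) : ℝ)) := by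
  set r := √(∑ w : Fin k → Fin n, ‖b (List.ofFn w)‖ ^ 2)
  have hr_sq : ∑ w : Fin k → Fin n, ‖b (List.ofFn w)‖ ^ 2 = r ^ 2 :=
    (Real.sq_sqrt (by positivity)).symm
  have hr_nonneg : 0 ≤ r := Real.sqrt_nonneg _
  rcases hr_nonneg.eq_or_lt with hr | hr
  · have hb := h.re_coeff_nil_nonneg (Nat.zero_lt_of_lt hkm) hQ
    rw [← hr]
    simpa using norm_coeff_one_le_of_re_eval_nonneg (N := (m - 1) / k)
      (f := .C (b [])) (by simp) (by simpa using fun _ _ => hb)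
  have hunit : ∑ w : Fin k → Fin n, ‖b (List.ofFn w) / r‖ ^ 2 = 1 := by
    simp_rw [norm_div, div_pow, ← Finset.sum_div, hr_sq, Complex.norm_real,
      Real.norm_of_nonneg hr_nonneg]
    exact div_self (by positivity)
  have hpair : ∑ w : Fin k → Fin n, conj (b (List.ofFn w) / r) * b (List.ofFn w) = r := by
    have hr_ne : (r : ℂ) ≠ 0 := by exact_mod_cast hr.ne'
    simp only [map_div₀, Complex.conj_ofReal, div_mul_eq_mul_div, Complex.conj_mul',
      ← Finset.sum_div]
    rw [div_eq_iff hr_ne, ← sq]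
    exact_mod_cast hr_sq
  have hbound := h.norm_sum_conj_mul_coeff_le (v := fun α => b α / r) hk hkm hQ hunit
  rwa [hpair, Complex.norm_real, Real.norm_of_nonneg hr_nonneg] at hbound

theorem sqrt_sum_sq_norm_coeff_le_of_re_le_one {a : List (Fin n) → ℂ} {m k : ℕ} (hk : 1 ≤ k)
    (hkm : k < m) {p : H →L[ℂ] H} (hp : p = ∑ r ∈ Finset.range m, homogPart a S r)
    (hre : (2 : ℂ)⁻¹ • (p + ContinuousLinearMap.adjoint p) ≤ 1) :
    √(∑ w : Fin k → Fin n, ‖a (List.ofFn w)‖ ^ 2) ≤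
      2 * (1 - (a []).re) * Real.cos (Real.pi / (((m - 1) / k + 2 : ℕ) : ℝ)) := by
  have hQ (x : H) : 0 ≤ (inner ℂ x
      ((∑ r ∈ Finset.range m, homogPart (Pi.single [] 1 - a) S r) x)).re := by
    rw [← one_sub_sum_homogPart (Nat.zero_lt_of_lt hkm), ← hp]
    exact re_inner_one_sub_apply_nonneg hre x
  have hne_nil (w : Fin k → Fin n) : List.ofFn w ≠ [] := by
    rw [Ne, List.ofFn_eq_nil_iff]
    omega
  simpa [hne_nil] using h.sqrt_sum_sq_norm_coeff_le hk hkm hQ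

end IsVacuumRowIsometry

theorem stmt_4_general {S : Fin n → H →L[ℂ] H} {Ω : H} (hS : IsVacuumRowIsometry S Ω)
    {a : List (Fin n) → ℂ} {m : ℕ} {p : H →L[ℂ] H}
    (hp : p = ∑ k ∈ Finset.range m, homogPart a S k)
    (hre : (2 : ℂ)⁻¹ • (p + ContinuousLinearMap.adjoint p) ≤ 1)
    {A : Type*} [CStarAlgebra A] [PartialOrder A] [StarOrderedRing A] {T : Fin n → A} {t : ℝ}
    (hT : √‖∑ i, T i * star (T i)‖ ≤ t) :
    ∑ k ∈ Finset.range m, ‖homogPart (fun α => (‖a α‖ : ℂ)) T k‖ ≤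
      ‖a []‖ + 2 * (1 - (a []).re) * fm m t := by
  rcases m with _ | m
  · simp [fm]
  have hconst : ‖homogPart (fun α => (‖a α‖ : ℂ)) T 0‖ ≤ ‖a []‖ := by
    rw [homogPart_zero]
    refine (norm_smul_le _ _).trans ?_
    simpa using
      mul_le_of_le_one_right (norm_nonneg (a [])) (norm_one_le_one_of_cstarRing (A := A))
  have hpart {k : ℕ} (hk : 1 ≤ k) (hkm : k < m + 1) : ‖homogPart (fun α => (‖a α‖ : ℂ)) T k‖ ≤
      2 * (1 - (a []).re) * (t ^ k * Real.cos (Real.pi / ((m / k + 2 : ℕ) : ℝ))) :=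
    calc ‖homogPart (fun α => (‖a α‖ : ℂ)) T k‖
      _ ≤ √(∑ w : Fin k → Fin n, ‖a (List.ofFn w)‖ ^ 2) * √‖∑ i, T i * star (T i)‖ ^ k := by
          simpa using norm_homogPart_le (fun α => (‖a α‖ : ℂ)) T k
      _ ≤ 2 * (1 - (a []).re) * Real.cos (Real.pi / ((m / k + 2 : ℕ) : ℝ)) * t ^ k := by
          have hcoeff := hS.sqrt_sum_sq_norm_coeff_le_of_re_le_one hk hkm hp hre
          rw [Nat.add_sub_cancel] at hcoeff
          exact mul_le_mul hcoeff (by gcongr) (by positivity) ((Real.sqrt_nonneg _).trans hcoeff)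
      _ = _ := by ring
  rw [Finset.range_eq_Ico, Finset.sum_eq_sum_Ico_succ_bot m.succ_pos, fm, Nat.add_sub_cancel,
    ← Finset.Ico_add_one_right_eq_Icc, Finset.mul_sum]
  exact add_le_add hconst (Finset.sum_le_sum fun k hk =>
    hpart (Finset.mem_Ico.mp hk).1 (Finset.mem_Ico.mp hk).2)

end FockRepresentation

section FullFock

variable {n : ℕ}

theorem inner_fockBasis_left (α : List (Fin n)) (x : Fock n) :
    inner ℂ (fockBasis n α) x = x α := by
  simp [fockBasis, lp.inner_single_left]

theorem star_apply_eq_apply_cons {S : Fin n → Fock n →L[ℂ] Fock n}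
    (hS : ∀ (i : Fin n) (α : List (Fin n)), S i (fockBasis n α) = fockBasis n (i :: α))
    (i : Fin n) (x : Fock n) (α : List (Fin n)) : star (S i) x α = x (i :: α) := by
  rw [← inner_fockBasis_left, ContinuousLinearMap.star_eq_adjoint,
    ContinuousLinearMap.adjoint_inner_right, hS, inner_fockBasis_left]

theorem isVacuumRowIsometry_fockBasis_nil {S : Fin n → Fock n →L[ℂ] Fock n}
    (hS : ∀ (i : Fin n) (α : List (Fin n)), S i (fockBasis n α) = fockBasis n (i :: α)) :
    IsVacuumRowIsometry S (fockBasis n []) where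
  star_mul_eq i j := by
    have hstar (α : List (Fin n)) :
        star (S j) (fockBasis n (i :: α)) = if i = j then fockBasis n α else 0 := by
      ext β
      rw [star_apply_eq_apply_cons hS]
      split_ifs with hij <;> simp [fockBasis, Pi.single_apply, hij, Ne.symm]
    ext x α
    rw [mul_apply_eq_comp, star_apply_eq_apply_cons hS, ← inner_fockBasis_left,
      ← ContinuousLinearMap.adjoint_inner_left, ← ContinuousLinearMap.star_eq_adjoint, hstar]
    split_ifs <;> simp [inner_fockBasis_left]
  star_apply_vacuum i := by
    ext α
    simp [star_apply_eq_apply_cons hS, fockBasis]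
  norm_vacuum := by simp [fockBasis, lp.norm_single]

end FullFock

theorem stmt_4 (n : ℕ) (hn : 1 ≤ n) (m : ℕ) (hm : 2 ≤ m)
    (a : List (Fin n) → ℂ) (ha_im : (a []).im = 0) (ha_nonneg : 0 ≤ (a []).re)
    (S : Fin n → Fock n →L[ℂ] Fock n)
    (hS : ∀ (i : Fin n) (α : List (Fin n)), S i (fockBasis n α) = fockBasis n (i :: α))
    (p : Fock n →L[ℂ] Fock n)
    (hp : p = ∑ k ∈ Finset.range m, ∑ w : Fin k → Fin n,
      a (List.ofFn w) • wordProd S (List.ofFn w))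
    (hre : (2 : ℂ)⁻¹ • (p + ContinuousLinearMap.adjoint p) ≤ 1)
    (t : ℝ) (htm : t ∈ Set.Ioc (0 : ℝ) 1) (hts : fm m t = 1 / 2) :
    ∀ (K : Type) [NormedAddCommGroup K] [InnerProductSpace ℂ K] [CompleteSpace K],
      ∀ T : Fin n → K →L[ℂ] K,
        Real.sqrt ‖∑ i, T i * ContinuousLinearMap.adjoint (T i)‖ ≤ t →
        ∑ k ∈ Finset.range m, ‖∑ w : Fin k → Fin n,
          ((‖a (List.ofFn w)‖ : ℂ)) • wordProd T (List.ofFn w)‖ ≤ 1 := by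
  intro K _ _ _ T hT
  have hnorm : ‖a []‖ = (a []).re :=
    congrArg Complex.re (Complex.norm_of_nonneg' (Complex.nonneg_iff.mpr ⟨ha_nonneg, ha_im.symm⟩))
  refine (stmt_4_general (isVacuumRowIsometry_fockBasis_nil hS) hp hre hT).trans_eq ?_
  rw [hnorm, hts]
  ring
end

section
/- Let (a_k)_{k≥0} be complex numbers with limsup_{k→∞} |a_k|^{1/k} ≤ 1 and let f(z) = ∑_{k=0}^∞ a_k z^k for z ∈ 𝔻. Then Re f(z) ≤ 1 for all z ∈ 𝔻 if and only if for every r ∈ [0,1) the operator f(rS) := ∑_{k=0}^∞ r^k a_k S^k (which converges in operator norm) satisfies Re f(rS) ≤ I. Moreover, if a_k = 0 for all but finitely many k (so that f is a polynomial p), then Re p(z) ≤ 1 for all z ∈ 𝔻 if and only if Re p(S) ≤ I. -/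
open scoped BigOperators

/-- `ℓ²(ℕ)` with complex coefficients. -/
noncomputable abbrev l2N : Type := lp (fun _ : ℕ => ℂ) 2

/-!
For a contraction `T` with `‖T‖ < 1` and a vector `x`, the function
`D z = 2 Re ⟨x, (1 - z̄ T)⁻¹ x⟩ - ‖x‖²` on the unit circle is nonnegative, has mean `‖x‖²`, and has
Fourier coefficients `⟨x, Tᵏ x⟩` for `k ≥ 0`. The mean of `f D` is therefore `⟨x, f(T) x⟩`, so that
`Re f ≤ M` on the circle gives `Re ⟨x, f(T) x⟩ ≤ M ‖x‖²`; the case `‖T‖ = 1` follows by letting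
`r → 1` in `rT`. Conversely, `Re f(T) ≤ M` bounds the real part of the spectrum of `f(T)`, which
contains `f(z)` for every `z` in the spectrum of `T`, and the spectrum of the shift contains the
unit circle. The values of `f` on the ball are those of `z ↦ f(rz)` on the circle, for `r < 1`.
-/

open MeasureTheory Filter Topology ComplexConjugate AddCircle
open ContinuousLinearMap (adjoint)

section CircleSeries

local instance : Fact (0 < (1 : ℝ)) := ⟨one_pos⟩

/-- The function `∑ bₖ zᵏ` on the unit circle `z = exp (2πit)`, summed in the uniform norm. -/
noncomputable def circleSeries (b : ℕ → ℂ) : C(UnitAddCircle, ℂ) :=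
  ∑' k : ℕ, b k • fourier k

variable {b c : ℕ → ℂ}

lemma hasSum_circleSeries (hb : Summable fun k ↦ ‖b k‖) :
    HasSum (fun k : ℕ ↦ b k • (fourier k : C(UnitAddCircle, ℂ))) (circleSeries b) := by
  refine Summable.hasSum (.of_norm ?_)
  simpa only [norm_smul, fourier_norm, mul_one] using hb

lemma circleSeries_apply (hb : Summable fun k ↦ ‖b k‖) (t : UnitAddCircle) :
    circleSeries b t = ∑' k, b k * (toCircle t : ℂ) ^ k := by
  have h := (ContinuousMap.evalCLM ℂ t).hasSum (hasSum_circleSeries hb)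
  simpa [toCircle_nsmul] using h.tsum_eq.symm

lemma circleSeries_single_zero_one (t : UnitAddCircle) : circleSeries (Pi.single 0 1) t = 1 := by
  rw [circleSeries, tsum_eq_single 0 (by simp +contextual)]
  simp

lemma integral_fourier (n : ℤ) :
    ∫ t : UnitAddCircle, fourier n t ∂haarAddCircle = if n = 0 then 1 else 0 := by
  simpa [fourierCoeff, Pi.single_apply, eq_comm] using congrFun (fourierCoeff_fourier (T := 1) n) 0

lemma hasSum_integral_circleSeries_mul_conj (hb : Summable fun k ↦ ‖b k‖)
    (φ : C(UnitAddCircle, ℂ)) :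
    HasSum (fun k : ℕ ↦ b k * ∫ t, fourier k t * conj (φ t) ∂haarAddCircle)
      (∫ t, circleSeries b t * conj (φ t) ∂haarAddCircle) := by
  let E := ContinuousMap.toLp (E := ℂ) 2 (haarAddCircle (T := 1)) ℂ
  have h := ((innerSL ℂ (E φ)).comp E).hasSum (hasSum_circleSeries hb)
  simpa [Function.comp_def, E, ContinuousMap.inner_toLp, inner_smul_right] using h

lemma integral_circleSeries_mul_fourier_neg (hb : Summable fun k ↦ ‖b k‖) (m : ℕ) :
    ∫ t, circleSeries b t * fourier (-m) t ∂haarAddCircle = b m := by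
  have h := hasSum_integral_circleSeries_mul_conj hb (fourier m)
  simp only [← fourier_neg, ← fourier_add, integral_fourier] at h
  refine h.unique ?_
  convert hasSum_ite_eq m (b m) using 2 with k
  grind

lemma integral_circleSeries_mul_fourier (hb : Summable fun k ↦ ‖b k‖) (m : ℕ) :
    ∫ t, circleSeries b t * fourier m t ∂haarAddCircle = if m = 0 then b 0 else 0 := by
  have h := hasSum_integral_circleSeries_mul_conj hb (fourier (-m))
  simp only [← fourier_neg, neg_neg, ← fourier_add, integral_fourier] at h
  refine h.unique ?_
  convert hasSum_ite_eq 0 (if m = 0 then b 0 else 0) using 2 with k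
  grind

lemma integral_circleSeries_mul_conj_circleSeries (hb : Summable fun k ↦ ‖b k‖)
    (hc : Summable fun k ↦ ‖c k‖) :
    ∫ t, circleSeries b t * conj (circleSeries c t) ∂haarAddCircle = ∑' k, b k * conj (c k) := by
  rw [← (hasSum_integral_circleSeries_mul_conj hb _).tsum_eq]
  congr! 3 with k
  rw [← integral_circleSeries_mul_fourier_neg hc, ← integral_conj]
  simp only [fourier_neg, map_mul, Complex.conj_conj, mul_comm]

lemma integral_circleSeries_mul_circleSeries (hb : Summable fun k ↦ ‖b k‖)
    (hc : Summable fun k ↦ ‖c k‖) :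
    ∫ t, circleSeries b t * circleSeries c t ∂haarAddCircle = b 0 * c 0 := by
  have h := hasSum_integral_circleSeries_mul_conj hb (star (circleSeries c))
  simp only [ContinuousMap.star_apply, RCLike.star_def, Complex.conj_conj,
    mul_comm (fourier _ _), integral_circleSeries_mul_fourier hc] at h
  refine h.unique ?_
  convert hasSum_ite_eq 0 (b 0 * c 0) using 2 with k
  grind

lemma integrable_haarAddCircle_of_continuous {E : Type*} [NormedAddCommGroup E]
    {f : UnitAddCircle → E} (hf : Continuous f) : Integrable f haarAddCircle :=
  hf.integrable_of_hasCompactSupport (.of_compactSpace _)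

lemma integral_circleSeries_mul_poisson (hb : Summable fun k ↦ ‖b k‖)
    (hc : Summable fun k ↦ ‖c k‖) (hc0 : conj (c 0) = c 0) :
    ∫ t, circleSeries b t * ((2 * (circleSeries c t).re - (c 0).re : ℝ) : ℂ) ∂haarAddCircle =
      ∑' k, b k * conj (c k) := by
  set B := circleSeries b
  set C := circleSeries c
  have hB : ∫ t, B t ∂haarAddCircle = b 0 := by
    simpa using integral_circleSeries_mul_fourier hb 0
  calc ∫ t, B t * ((2 * (C t).re - (c 0).re : ℝ) : ℂ) ∂haarAddCircle
    _ = ∫ t, (B t * C t + B t * conj (C t) - B t * c 0) ∂haarAddCircle := by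
      refine integral_congr_ae (.of_forall fun t ↦ ?_)
      have h := Complex.add_conj (C t)
      push_cast at h ⊢
      rw [Complex.conj_eq_iff_re.1 hc0]
      linear_combination -B t * h
    _ = b 0 * c 0 + (∑' k, b k * conj (c k)) - b 0 * c 0 := by
      rw [integral_sub, integral_add, integral_mul_const, hB,
        integral_circleSeries_mul_circleSeries hb hc,
        integral_circleSeries_mul_conj_circleSeries hb hc]
      all_goals exact integrable_haarAddCircle_of_continuous (by fun_prop)
    _ = ∑' k, b k * conj (c k) := by ring

theorem re_tsum_mul_conj_le {M : ℝ} (hb : Summable fun k ↦ ‖b k‖) (hc : Summable fun k ↦ ‖c k‖)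
    (hc0 : conj (c 0) = c 0)
    (hbM : ∀ z ∈ Metric.sphere (0 : ℂ) 1, (∑' k, b k * z ^ k).re ≤ M)
    (hcpos : ∀ z ∈ Metric.sphere (0 : ℂ) 1, (c 0).re ≤ 2 * (∑' k, c k * z ^ k).re) :
    (∑' k, b k * conj (c k)).re ≤ M * (c 0).re := by
  let D (t : UnitAddCircle) : ℝ := 2 * (circleSeries c t).re - (c 0).re
  have hDcont : Continuous D := by fun_prop
  have hz (t : UnitAddCircle) : (toCircle t : ℂ) ∈ Metric.sphere 0 1 := by
    simp [Circle.norm_coe]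
  have hD (t : UnitAddCircle) : 0 ≤ D t := by
    simpa only [D, circleSeries_apply hc, sub_nonneg] using hcpos _ (hz t)
  have hB (t : UnitAddCircle) : (circleSeries b t).re ≤ M := by
    simpa only [circleSeries_apply hb] using hbM _ (hz t)
  have hmass : ∫ t, D t ∂haarAddCircle = (c 0).re := by
    have h := integral_circleSeries_mul_poisson (b := Pi.single 0 1)
      (summable_of_ne_finset_zero (s := {0}) (by simp +contextual)) hc hc0
    rw [tsum_eq_single 0 (by simp +contextual)] at h
    simp only [circleSeries_single_zero_one, one_mul, integral_complex_ofReal, Pi.single_eq_same,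
      hc0] at h
    exact congrArg Complex.re h
  calc (∑' k, b k * conj (c k)).re
    _ = (∫ t, circleSeries b t * (D t : ℂ) ∂haarAddCircle).re := by
      rw [integral_circleSeries_mul_poisson hb hc hc0]
    _ = ∫ t, (circleSeries b t).re * D t ∂haarAddCircle := by
      rw [← RCLike.re_to_complex, ← integral_re]
      · simp only [RCLike.re_to_complex, Complex.re_mul_ofReal]
      · exact integrable_haarAddCircle_of_continuous (by fun_prop)
    _ ≤ ∫ t, M * D t ∂haarAddCircle := by
      refine integral_mono ?_ ?_ fun t ↦ mul_le_mul_of_nonneg_right (hB t) (hD t)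
      all_goals exact integrable_haarAddCircle_of_continuous (by fun_prop)
    _ = M * (c 0).re := by rw [integral_const_mul, hmass]

end CircleSeries

section BanachAlgebra

variable {A : Type*} [NormedRing A] [NormedAlgebra ℂ A] {b : ℕ → ℂ} {T : A}

lemma sum_mul_pow_mem_spectrum {z : ℂ} (hz : z ∈ spectrum ℂ T) (s : Finset ℕ) :
    ∑ k ∈ s, b k * z ^ k ∈ spectrum ℂ (∑ k ∈ s, b k • T ^ k) := by
  have h := spectrum.subset_polynomial_aeval T (∑ k ∈ s, Polynomial.monomial k (b k))
    (Set.mem_image_of_mem _ hz)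
  simpa only [Polynomial.eval_finsetSum, Polynomial.eval_monomial, map_sum,
    Polynomial.aeval_monomial, Algebra.smul_def] using h

variable [CompleteSpace A]

lemma summable_smul_pow (hb : Summable fun k ↦ ‖b k‖) (hT : ∀ k, ‖T ^ k‖ ≤ 1) :
    Summable fun k ↦ b k • T ^ k := by
  refine hb.of_norm_bounded fun k ↦ ?_
  rw [norm_smul]
  exact mul_le_of_le_one_right (norm_nonneg _) (hT k)

lemma tendsto_tsum_smul_pow_nhdsLT_one (hb : Summable fun k ↦ ‖b k‖) (hT : ∀ k, ‖T ^ k‖ ≤ 1) :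
    Tendsto (fun r : ℝ ↦ ∑' k, b k • ((r : ℂ) • T) ^ k) (𝓝[<] 1) (𝓝 (∑' k, b k • T ^ k)) := by
  refine tendsto_tsum_of_dominated_convergence hb (fun k ↦ ?_) ?_
  · have hcont : Continuous fun r : ℝ ↦ b k • ((r : ℂ) • T) ^ k := by fun_prop
    simpa using (hcont.tendsto 1).mono_left nhdsWithin_le_nhds
  · filter_upwards [Ioo_mem_nhdsLT zero_lt_one] with r hr k
    rw [smul_pow, norm_smul, norm_smul, norm_pow, Complex.norm_of_nonneg hr.1.le]
    exact mul_le_of_le_one_right (norm_nonneg _)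
      (mul_le_one₀ (pow_le_one₀ hr.1.le hr.2.le) (norm_nonneg _) (hT k))

lemma summable_mul_pow_of_mem_spectrum {z : ℂ} (hz : z ∈ spectrum ℂ T)
    (hS : Summable fun k ↦ b k • T ^ k) : Summable fun k ↦ b k * z ^ k := by
  refine summable_iff_vanishing_norm.2 fun ε hε ↦ ?_
  obtain ⟨s, hs⟩ := summable_iff_vanishing_norm.1 (hS.const_smul (‖(1 : A)‖ : ℂ)) ε hε
  refine ⟨s, fun t ht ↦ ?_⟩
  calc ‖∑ k ∈ t, b k * z ^ k‖
    _ ≤ ‖∑ k ∈ t, b k • T ^ k‖ * ‖(1 : A)‖ :=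
      spectrum.norm_le_norm_mul_of_mem (sum_mul_pow_mem_spectrum hz t)
    _ = ‖∑ k ∈ t, (‖(1 : A)‖ : ℂ) • (b k • T ^ k)‖ := by
      rw [← Finset.smul_sum, norm_smul, Complex.norm_of_nonneg (norm_nonneg _), mul_comm]
    _ < ε := hs t ht

lemma tsum_mul_pow_mem_spectrum {z : ℂ} (hz : z ∈ spectrum ℂ T)
    (hS : Summable fun k ↦ b k • T ^ k) :
    ∑' k, b k * z ^ k ∈ spectrum ℂ (∑' k, b k • T ^ k) := by
  have hs := summable_mul_pow_of_mem_spectrum hz hS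
  have hlim := ((algebraMapCLM ℂ A).continuous.tendsto _ |>.comp hs.hasSum).sub hS.hasSum
  exact nonunits.isClosed.mem_of_tendsto hlim
    (.of_forall fun s ↦ sum_mul_pow_mem_spectrum hz s)

end BanachAlgebra

section NormedSpace

variable {𝕜 E : Type*} [NontriviallyNormedField 𝕜] [SeminormedAddCommGroup E] [NormedSpace 𝕜 E]
  {T : E →L[𝕜] E}

lemma norm_pow_apply_le (k : ℕ) (x : E) : ‖(T ^ k) x‖ ≤ ‖T‖ ^ k * ‖x‖ := by
  induction k with
  | zero => simp
  | succ k ih =>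
    calc ‖(T ^ (k + 1)) x‖
      _ = ‖T ((T ^ k) x)‖ := by rw [pow_succ', mul_apply_eq_comp]
      _ ≤ ‖T‖ * (‖T‖ ^ k * ‖x‖) := T.le_opNorm_of_le ih
      _ = ‖T‖ ^ (k + 1) * ‖x‖ := by ring

lemma norm_pow_le_one (hT : ‖T‖ ≤ 1) (k : ℕ) : ‖T ^ k‖ ≤ 1 :=
  ((T ^ k).opNorm_le_bound (by positivity) (norm_pow_apply_le k)).trans
    (pow_le_one₀ (norm_nonneg T) hT)

end NormedSpace

section Hilbert

variable {H : Type*} [NormedAddCommGroup H] [InnerProductSpace ℂ H]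

lemma hasSum_inner_apply {F : ℕ → H →L[ℂ] H} {S : H →L[ℂ] H} (h : HasSum F S) (x y : H) :
    HasSum (fun k ↦ inner ℂ x (F k y)) (inner ℂ x (S y)) :=
  ((innerSL ℂ x).comp (ContinuousLinearMap.apply ℂ H y)).hasSum h

variable [CompleteSpace H] {b : ℕ → ℂ} {T : H →L[ℂ] H} {M : ℝ}

lemma norm_sq_le_two_mul_re_inner_tsum_pow (hT : ‖T‖ < 1) (x : H) :
    ‖x‖ ^ 2 ≤ 2 * (inner ℂ x ((∑' k, T ^ k) x)).re := by
  set y := (∑' k, T ^ k) x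
  have hy : y - T y = x := by
    simpa using DFunLike.congr_fun (mul_neg_geom_series T hT) x
  have hxy : ‖x - y‖ ≤ ‖y‖ := by
    rw [norm_sub_rev, ← hy, sub_sub_cancel]
    simpa using T.le_of_opNorm_le hT.le y
  have hexpand := norm_sub_sq (𝕜 := ℂ) x y
  rw [RCLike.re_to_complex] at hexpand
  linarith [pow_le_pow_left₀ (norm_nonneg _) hxy 2]

lemma re_inner_tsum_smul_pow_le_of_norm_lt_one (hb : Summable fun k ↦ ‖b k‖) (hT : ‖T‖ < 1)
    (hbM : ∀ z ∈ Metric.sphere (0 : ℂ) 1, (∑' k, b k * z ^ k).re ≤ M) (x : H) :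
    (inner ℂ x ((∑' k, b k • T ^ k) x)).re ≤ M * ‖x‖ ^ 2 := by
  let c (k : ℕ) : ℂ := inner ℂ ((T ^ k) x) x
  have hconj (k : ℕ) : conj (c k) = inner ℂ x ((T ^ k) x) := inner_conj_symm _ _
  have hc0 : c 0 = (‖x‖ ^ 2 : ℝ) := by simp [c, inner_self_eq_norm_sq_to_K]
  have hc : Summable fun k ↦ ‖c k‖ := by
    refine ((summable_geometric_of_lt_one (norm_nonneg T) hT).mul_right (‖x‖ ^ 2)).of_nonneg_of_le
      (fun _ ↦ norm_nonneg _) fun k ↦ ?_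
    calc ‖c k‖
      _ ≤ ‖(T ^ k) x‖ * ‖x‖ := norm_inner_le_norm _ _
      _ ≤ ‖T‖ ^ k * ‖x‖ * ‖x‖ := by gcongr; exact norm_pow_apply_le k x
      _ = ‖T‖ ^ k * ‖x‖ ^ 2 := by ring
  have hpos : ∀ z ∈ Metric.sphere (0 : ℂ) 1, (c 0).re ≤ 2 * (∑' k, c k * z ^ k).re := by
    intro z hz
    have hzT : ‖conj z • T‖ < 1 := by
      rwa [norm_smul, RCLike.norm_conj, mem_sphere_zero_iff_norm.1 hz, one_mul]
    have hsum : inner ℂ x ((∑' k, (conj z • T) ^ k) x) = conj (∑' k, c k * z ^ k) := by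
      rw [Complex.conj_tsum,
        ← (hasSum_inner_apply (summable_geometric_of_norm_lt_one hzT).hasSum x x).tsum_eq]
      congr! 2 with k
      simp [smul_pow, hconj, mul_comm]
    simpa only [hc0, Complex.ofReal_re, hsum, Complex.conj_re] using
      norm_sq_le_two_mul_re_inner_tsum_pow hzT x
  have hsum := hasSum_inner_apply
    (summable_smul_pow hb (norm_pow_le_one hT.le)).hasSum x x
  simp only [smul_apply, inner_smul_right, ← hconj] at hsum
  simpa only [hsum.tsum_eq, hc0, Complex.ofReal_re] using
    re_tsum_mul_conj_le hb hc (by rw [hc0, Complex.conj_ofReal]) hbM hpos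

theorem re_inner_tsum_smul_pow_le (hb : Summable fun k ↦ ‖b k‖) (hT : ‖T‖ ≤ 1)
    (hbM : ∀ z ∈ Metric.sphere (0 : ℂ) 1, (∑' k, b k * z ^ k).re ≤ M) (x : H) :
    (inner ℂ x ((∑' k, b k • T ^ k) x)).re ≤ M * ‖x‖ ^ 2 := by
  have hlim := tendsto_tsum_smul_pow_nhdsLT_one hb (norm_pow_le_one hT)
  have hcont : Continuous fun F : H →L[ℂ] H ↦ (inner ℂ x (F x)).re := by fun_prop
  refine le_of_tendsto ((hcont.tendsto _).comp hlim) ?_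
  filter_upwards [Ioo_mem_nhdsLT zero_lt_one] with r hr
  refine re_inner_tsum_smul_pow_le_of_norm_lt_one hb ?_ hbM x
  rw [norm_smul, Complex.norm_of_nonneg hr.1.le]
  exact (mul_le_of_le_one_right hr.1.le hT).trans_lt hr.2

lemma half_smul_add_adjoint_le_one_iff :
    (2 : ℂ)⁻¹ • (T + adjoint T) ≤ 1 ↔ ∀ x, (inner ℂ x (T x)).re ≤ ‖x‖ ^ 2 := by
  have hsa : IsSelfAdjoint (1 - (2 : ℂ)⁻¹ • (T + adjoint T)) := by
    refine (IsSelfAdjoint.one _).sub (.smul ?_ (IsSelfAdjoint.add_star_self T))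
    simp [isSelfAdjoint_iff]
  have hre (x : H) : (1 - (2 : ℂ)⁻¹ • (T + adjoint T)).reApplyInnerSelf x =
      ‖x‖ ^ 2 - (inner ℂ x (T x)).re := by
    rw [ContinuousLinearMap.reApplyInnerSelf_apply, inner_re_symm]
    simp only [sub_apply, one_apply_eq_self, smul_apply, add_apply, inner_sub_right,
      inner_smul_right, inner_add_right, ContinuousLinearMap.adjoint_inner_right, map_sub,
      inner_self_eq_norm_sq]
    rw [← inner_conj_symm (T x) x, Complex.add_conj]
    simp
  simp only [ContinuousLinearMap.le_def, ContinuousLinearMap.isPositive_def', hsa, true_and, hre,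
    sub_nonneg]

lemma re_le_of_mem_spectrum (hT : ∀ x, (inner ℂ x (T x)).re ≤ M * ‖x‖ ^ 2) {z : ℂ}
    (hz : z ∈ spectrum ℂ T) : z.re ≤ M := by
  by_contra! hzM
  refine hz (ContinuousLinearMap.isUnit_of_forall_le_norm_inner_map _
    (c := ⟨z.re - M, (sub_pos.2 hzM).le⟩) (sub_pos.2 hzM) fun x ↦ ?_)
  calc ‖x‖ ^ 2 * (z.re - M)
    _ ≤ z.re * ‖x‖ ^ 2 - (inner ℂ x (T x)).re := by linarith [hT x]
    _ = (inner ℂ x ((algebraMap ℂ (H →L[ℂ] H) z - T) x)).re := by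
      simp [Algebra.algebraMap_eq_smul_one, inner_self_eq_norm_sq_to_K, ← Complex.ofReal_pow]
    _ ≤ ‖inner ℂ ((algebraMap ℂ (H →L[ℂ] H) z - T) x) x‖ := by
      rw [norm_inner_symm]
      exact Complex.re_le_norm _

theorem half_smul_tsum_add_adjoint_le_one_iff (hT : ‖T‖ ≤ 1)
    (hσ : Metric.sphere 0 1 ⊆ spectrum ℂ T) :
    (2 : ℂ)⁻¹ • ((∑' k, b k • T ^ k) + adjoint (∑' k, b k • T ^ k)) ≤ 1 ↔
      ∀ z ∈ Metric.sphere (0 : ℂ) 1, (∑' k, b k * z ^ k).re ≤ 1 := by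
  by_cases hb : Summable fun k ↦ ‖b k‖
  · have hbT := summable_smul_pow hb (norm_pow_le_one hT)
    rw [half_smul_add_adjoint_le_one_iff]
    refine ⟨fun h z hz ↦ ?_, fun h x ↦ ?_⟩
    · exact re_le_of_mem_spectrum (by simpa using h) (tsum_mul_pow_mem_spectrum (hσ hz) hbT)
    · simpa using re_inner_tsum_smul_pow_le hb hT h x
  · -- Neither series converges, so both sums have the junk value `0`.
    have hbz {z : ℂ} (hz : z ∈ Metric.sphere (0 : ℂ) 1) : ¬ Summable fun k ↦ b k * z ^ k := by
      simpa [← summable_norm_iff (f := fun k ↦ b k * z ^ k), mem_sphere_zero_iff_norm.1 hz] using hb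
    have hbT : ¬ Summable fun k ↦ b k • T ^ k := fun h ↦
      hbz (by simp) (summable_mul_pow_of_mem_spectrum (hσ (by simp : (1 : ℂ) ∈ _)) h)
    rw [half_smul_add_adjoint_le_one_iff, tsum_eq_zero_of_not_summable hbT]
    exact iff_of_true (by simp) fun z hz ↦ by simp [tsum_eq_zero_of_not_summable (hbz hz)]

end Hilbert

section Ball

lemma forall_mem_ball_iff_forall_sphere {p : ℂ → Prop} :
    (∀ z ∈ Metric.ball (0 : ℂ) 1, p z) ↔
      ∀ r : ℝ, 0 ≤ r → r < 1 → ∀ w ∈ Metric.sphere (0 : ℂ) 1, p (r * w) := by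
  refine ⟨fun h r hr0 hr1 w hw ↦ h _ ?_, fun h z hz ↦ ?_⟩
  · rwa [mem_ball_zero_iff, norm_mul, mem_sphere_zero_iff_norm.1 hw, mul_one,
      Complex.norm_of_nonneg hr0]
  · rw [← Complex.norm_mul_exp_arg_mul_I z]
    exact h _ (norm_nonneg z) (mem_ball_zero_iff.1 hz) _ (by simp [Complex.norm_exp_ofReal_mul_I])

lemma forall_mem_ball_re_tsum_le_iff_sphere {b : ℕ → ℂ} {M : ℝ} (hb : Summable fun k ↦ ‖b k‖) :
    (∀ z ∈ Metric.ball (0 : ℂ) 1, (∑' k, b k * z ^ k).re ≤ M) ↔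
      ∀ z ∈ Metric.sphere (0 : ℂ) 1, (∑' k, b k * z ^ k).re ≤ M := by
  refine ⟨fun h z hz ↦ ?_, fun h z hz ↦ ?_⟩
  · have hlim := tendsto_tsum_smul_pow_nhdsLT_one (T := z) hb
      (by simp [mem_sphere_zero_iff_norm.1 hz])
    refine le_of_tendsto ((Complex.continuous_re.tendsto _).comp hlim) ?_
    filter_upwards [Ioo_mem_nhdsLT zero_lt_one] with r hr
    exact forall_mem_ball_iff_forall_sphere.1 h r hr.1.le hr.2 z hz
  · -- Multiplication by `z` is a contraction on the Hilbert space `ℂ`.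
    have hz1 : ‖ContinuousLinearMap.mul ℂ ℂ z‖ ≤ 1 := by
      simpa using (mem_ball_zero_iff.1 hz).le
    have hsum := hasSum_inner_apply (summable_smul_pow hb (norm_pow_le_one hz1)).hasSum 1 1
    have hpow (k : ℕ) : (ContinuousLinearMap.mul ℂ ℂ z ^ k) 1 = z ^ k := by
      induction k with
      | zero => simp
      | succ k ih => simp [pow_succ', ih]
    simp only [smul_apply, hpow, smul_eq_mul, RCLike.inner_apply, map_one, mul_one] at hsum
    simpa only [hsum.tsum_eq, RCLike.inner_apply, map_one, mul_one, norm_one, one_pow] using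
      re_inner_tsum_smul_pow_le hb hz1 h 1

end Ball

section Shift

variable {S : l2N →L[ℂ] l2N}

lemma norm_apply_of_shift (hS0 : ∀ x : l2N, (S x) 0 = 0)
    (hS1 : ∀ (x : l2N) (k : ℕ), (S x) (k + 1) = x k) (x : l2N) : ‖S x‖ = ‖x‖ := by
  have hasSum_norm_sq (y : l2N) : HasSum (fun k ↦ ‖y k‖ ^ 2) (‖y‖ ^ 2) := by
    simpa using lp.hasSum_norm (p := 2) (by norm_num) y
  have hSx := (hasSum_nat_add_iff' 1).2 (hasSum_norm_sq (S x))
  simp only [Finset.range_one, Finset.sum_singleton, hS0, hS1, norm_zero, zero_pow two_ne_zero,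
    sub_zero] at hSx
  exact (sq_eq_sq₀ (norm_nonneg _) (norm_nonneg _)).1 (hSx.unique (hasSum_norm_sq x))

lemma memℓp_two_pow {z : ℂ} (hz : ‖z‖ < 1) : Memℓp (fun n : ℕ ↦ z ^ n) 2 := by
  refine memℓp_gen ?_
  simpa [← pow_mul, mul_comm] using
    summable_geometric_of_lt_one (sq_nonneg ‖z‖) (pow_lt_one₀ (norm_nonneg z) hz two_ne_zero)

-- The range of `z - S` is orthogonal to `(z̄ⁿ)ₙ`, an eigenvector of the adjoint of the shift.
lemma mem_spectrum_of_shift (hS0 : ∀ x : l2N, (S x) 0 = 0)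
    (hS1 : ∀ (x : l2N) (k : ℕ), (S x) (k + 1) = x k) {z : ℂ} (hz : ‖z‖ < 1) :
    z ∈ spectrum ℂ S := by
  let v : l2N := ⟨fun n ↦ conj z ^ n, memℓp_two_pow (by rwa [RCLike.norm_conj])⟩
  have hv (k : ℕ) : v k = conj z ^ k := rfl
  have hinner (x : l2N) : HasSum (fun k ↦ z ^ k * x k) (inner ℂ v x) := by
    simpa [hv, mul_comm] using lp.hasSum_inner (𝕜 := ℂ) v x
  have horth (x : l2N) : inner ℂ v ((algebraMap ℂ (l2N →L[ℂ] l2N) z - S) x) = 0 := by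
    have hSx := (hasSum_nat_add_iff' 1).2 (hinner (S x))
    simp only [Finset.range_one, Finset.sum_singleton, hS0, hS1, mul_zero, sub_zero, pow_succ',
      mul_assoc] at hSx
    simp [Algebra.algebraMap_eq_smul_one, hSx.unique ((hinner x).mul_left z)]
  intro hunit
  obtain ⟨x, hx⟩ := (ContinuousLinearMap.isUnit_iff_bijective.1 hunit).surjective v
  have hv0 : v = 0 := inner_self_eq_zero.1 (hx ▸ horth x)
  simpa [hv0] using hv 0

lemma sphere_subset_spectrum_of_shift (hS0 : ∀ x : l2N, (S x) 0 = 0)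
    (hS1 : ∀ (x : l2N) (k : ℕ), (S x) (k + 1) = x k) : Metric.sphere 0 1 ⊆ spectrum ℂ S :=
  calc Metric.sphere (0 : ℂ) 1
    _ ⊆ closure (Metric.ball 0 1) := by
      rw [closure_ball _ one_ne_zero]
      exact Metric.sphere_subset_closedBall
    _ ⊆ spectrum ℂ S := (spectrum.isClosed S).closure_subset_iff.2 fun _ hz ↦
      mem_spectrum_of_shift hS0 hS1 (mem_ball_zero_iff.1 hz)

end Shift

theorem stmt_6_general {H : Type*} [NormedAddCommGroup H] [InnerProductSpace ℂ H]
    [CompleteSpace H] (a : ℕ → ℂ)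
    (_hlim : Filter.limsup (fun k : ℕ ↦ ‖a k‖ ^ (1 / (k : ℝ))) Filter.atTop ≤ 1)
    (T : H →L[ℂ] H) (hT : ‖T‖ ≤ 1) (hσ : Metric.sphere 0 1 ⊆ spectrum ℂ T) :
    ((∀ z ∈ Metric.ball (0 : ℂ) 1, (∑' k : ℕ, a k * z ^ k).re ≤ 1) ↔
      (∀ r : ℝ, 0 ≤ r → r < 1 →
        (2 : ℂ)⁻¹ • ((∑' k : ℕ, ((r : ℂ) ^ k * a k) • T ^ k) +
          adjoint (∑' k : ℕ, ((r : ℂ) ^ k * a k) • T ^ k)) ≤ 1)) ∧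
    ((Summable fun k : ℕ ↦ ‖a k‖) →
      ((∀ z ∈ Metric.ball (0 : ℂ) 1, (∑' k : ℕ, a k * z ^ k).re ≤ 1) ↔
        (2 : ℂ)⁻¹ • ((∑' k : ℕ, a k • T ^ k) +
          adjoint (∑' k : ℕ, a k • T ^ k)) ≤ 1)) := by
  refine ⟨?_, fun ha ↦ ?_⟩
  · simp only [half_smul_tsum_add_adjoint_le_one_iff hT hσ, forall_mem_ball_iff_forall_sphere,
      mul_pow, mul_left_comm, mul_assoc]
  · rw [half_smul_tsum_add_adjoint_le_one_iff hT hσ, forall_mem_ball_re_tsum_le_iff_sphere ha]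

theorem stmt_6 (a : ℕ → ℂ)
    (hlim : Filter.limsup (fun k : ℕ => ‖a k‖ ^ (1 / (k : ℝ))) Filter.atTop ≤ 1)
    (S : l2N →L[ℂ] l2N)
    (hS0 : ∀ x : l2N, (S x) 0 = 0)
    (hS1 : ∀ (x : l2N) (k : ℕ), (S x) (k + 1) = x k) :
    ((∀ z ∈ Metric.ball (0 : ℂ) 1, (∑' k : ℕ, a k * z ^ k).re ≤ 1) ↔
      (∀ r : ℝ, 0 ≤ r → r < 1 →
        (2 : ℂ)⁻¹ • ((∑' k : ℕ, ((r : ℂ) ^ k * a k) • S ^ k) +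
          ContinuousLinearMap.adjoint (∑' k : ℕ, ((r : ℂ) ^ k * a k) • S ^ k)) ≤ 1)) ∧
    ((∃ N : ℕ, ∀ k : ℕ, N ≤ k → a k = 0) →
      ((∀ z ∈ Metric.ball (0 : ℂ) 1, (∑' k : ℕ, a k * z ^ k).re ≤ 1) ↔
        (2 : ℂ)⁻¹ • ((∑' k : ℕ, a k • S ^ k) +
          ContinuousLinearMap.adjoint (∑' k : ℕ, a k • S ^ k)) ≤ 1)) := by
  have hS : ‖S‖ ≤ 1 := S.opNorm_le_bound zero_le_one fun x ↦ by
    rw [one_mul, norm_apply_of_shift hS0 hS1]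
  obtain ⟨hball, hsummable⟩ :=
    stmt_6_general a hlim S hS (sphere_subset_spectrum_of_shift hS0 hS1)
  refine ⟨hball, fun ⟨N, hN⟩ ↦ hsummable ?_⟩
  exact summable_of_ne_finset_zero (s := Finset.range N) fun k hk ↦ by
    rw [hN k (by simpa using hk), norm_zero]
end

section
/- Let m ≥ 2 be an integer and let p(z) = ∑_{k=0}^{m−1} a_k z^k be a polynomial with complex coefficients such that a₀ is real, a₀ ≥ 0, and Re p(z) ≤ 1 for all z ∈ 𝔻. Then |a_k| ≤ 2(1 − a₀) · cos(π/(⌊(m−1)/k⌋ + 2)) for every 1 ≤ k ≤ m−1. -/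
open scoped BigOperators

/-!
Sample the polynomial at the solutions of `z ^ N = c` with `‖c‖ = 1`. Averages of `z ^ e` over these
nodes vanish for `0 < |e| < N`, so averaging `q z * (t - re (conj u * z ^ k))` extracts
`t * b 0 - u * b k / 2` from `q z = ∑ b l * z ^ l`. Choosing `N = k * L`, `‖u‖ = 1` and
`c = -u ^ L` makes every `conj u * z ^ k` an `L`-th root of `-1`, whose real part is at most
`cos (π / L)`. For `t = cos (π / L)` the weights are therefore nonnegative, and if `0 ≤ re q` this
bounds `re (u * b k)` by `2 * re (b 0) * cos (π / L)`. There is no aliasing when `N` is at least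
`k` plus the length of the sum, which `L = (m - 1) / k + 2` guarantees. The theorem is the case
`q = A - p`.
-/

section RootSums

open Finset Polynomial

variable {K : Type*} [Field K] {n m k : ℕ} {c : K}

lemma sum_nthRootsFinset_zpow_eq_zero {ω : K} (hω : IsPrimitiveRoot ω n) (c : K) {e : ℤ}
    (he : ¬ (n : ℤ) ∣ e) : ∑ z ∈ nthRootsFinset n c, z ^ e = 0 := by
  rcases n.eq_zero_or_pos with rfl | hn
  · rw [nthRootsFinset_zero, sum_empty]
  have hω0 : ω ≠ 0 := hω.ne_zero hn.ne'
  have hrotate : ω ^ e * ∑ z ∈ nthRootsFinset n c, z ^ e = ∑ z ∈ nthRootsFinset n c, z ^ e := by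
    rw [mul_sum]
    refine sum_equiv (Equiv.mulLeft₀ ω hω0) (fun z ↦ ?_) fun z _ ↦ ?_
    · simp [hn, mul_pow, hω.pow_eq_one]
    · exact (mul_zpow ω z e).symm
  have hωe : ω ^ e ≠ 1 := fun h ↦ he ((hω.zpow_eq_one_iff_dvd e).1 h)
  exact eq_zero_of_mul_eq_self_left hωe hrotate

variable [IsSepClosed K] [NeZero (n : K)]

lemma card_nthRootsFinset (hc : c ≠ 0) : #(nthRootsFinset n c) = n := by
  classical
  obtain ⟨ω, hω⟩ := HasEnoughRootsOfUnity.exists_primitiveRoot K n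
  have hnodup : (nthRoots n c).Nodup :=
    nodup_roots (separable_X_pow_sub_C c (NeZero.ne (n : K)) hc)
  rw [nthRootsFinset_def, Multiset.toFinset_card_of_nodup hnodup, hω.card_nthRoots,
    if_pos (IsSepClosed.exists_pow_nat_eq c n)]

lemma sum_nthRootsFinset_pow_mul_sum_eq_zero (c : K) (a : ℕ → K) (hk : 0 < k) (hn : m + k ≤ n) :
    ∑ z ∈ nthRootsFinset n c, z ^ k * ∑ l ∈ range m, a l * z ^ l = 0 := by
  obtain ⟨ω, hω⟩ := HasEnoughRootsOfUnity.exists_primitiveRoot K n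
  simp only [mul_sum]
  rw [sum_comm]
  refine sum_eq_zero fun l hl ↦ ?_
  have hlm := mem_range.1 hl
  have hdvd : ¬ (n : ℤ) ∣ ((k + l : ℕ) : ℤ) :=
    mt Int.natCast_dvd_natCast.1 (Nat.not_dvd_of_pos_of_lt (by omega) (by omega))
  calc ∑ z ∈ nthRootsFinset n c, z ^ k * (a l * z ^ l)
      = a l * ∑ z ∈ nthRootsFinset n c, z ^ ((k + l : ℕ) : ℤ) := by
        rw [mul_sum]
        exact sum_congr rfl fun z _ ↦ by rw [zpow_natCast]; ring
    _ = 0 := by rw [sum_nthRootsFinset_zpow_eq_zero hω c hdvd, mul_zero]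

lemma sum_nthRootsFinset_inv_pow_mul_sum (hc : c ≠ 0) (a : ℕ → K) (hk : k < m) (hm : m ≤ n) :
    ∑ z ∈ nthRootsFinset n c, (z ^ k)⁻¹ * ∑ l ∈ range m, a l * z ^ l = n * a k := by
  obtain ⟨ω, hω⟩ := HasEnoughRootsOfUnity.exists_primitiveRoot K n
  have hmonomial (l : ℕ) : ∑ z ∈ nthRootsFinset n c, (z ^ k)⁻¹ * (a l * z ^ l)
      = a l * ∑ z ∈ nthRootsFinset n c, z ^ ((l : ℤ) - k) := by
    rw [mul_sum]
    refine sum_congr rfl fun z hz ↦ ?_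
    rw [zpow_sub₀ (ne_zero_of_mem_nthRootsFinset hc hz), zpow_natCast, zpow_natCast]
    ring
  simp only [mul_sum]
  rw [sum_comm, sum_eq_single_of_mem k (mem_range.2 hk) fun l hl hlk ↦ ?_]
  · rw [hmonomial, sub_self]
    simp only [zpow_zero, sum_const, card_nthRootsFinset hc, nsmul_one, mul_comm]
  · have hlm := mem_range.1 hl
    have hdvd : ¬ (n : ℤ) ∣ (l : ℤ) - k := fun h ↦
      hlk (by have := Int.eq_zero_of_abs_lt_dvd h (by rw [abs_lt]; omega); omega)
    rw [hmonomial, sum_nthRootsFinset_zpow_eq_zero hω c hdvd, mul_zero]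

end RootSums

section UnitCircle

open Finset Polynomial
open scoped ComplexConjugate

variable {n m k L : ℕ} {c u z : ℂ}

lemma norm_eq_one_of_mem_nthRootsFinset {K : Type*} [NormedField K] {c z : K} (hc : ‖c‖ = 1)
    (hz : z ∈ nthRootsFinset n c) : ‖z‖ = 1 := by
  rcases n.eq_zero_or_pos with rfl | hn
  · simp at hz
  · rw [mem_nthRootsFinset hn] at hz
    rwa [← pow_eq_one_iff_of_nonneg (norm_nonneg z) hn.ne', ← norm_pow, hz]

lemma re_le_cos_pi_div_of_pow_eq_neg_one (hz : z ^ n = -1) : z.re ≤ Real.cos (Real.pi / n) := by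
  have hn : n ≠ 0 := by
    rintro rfl
    norm_num at hz
  have hn0 : (0 : ℝ) < n := by positivity
  have hnorm : ‖z‖ = 1 :=
    norm_eq_one_of_mem_nthRootsFinset (by simp) ((mem_nthRootsFinset hn.bot_lt (-1)).2 hz)
  have hexp : Complex.exp (z.arg * Complex.I) = z := by
    simpa [hnorm] using Complex.norm_mul_exp_arg_mul_I z
  have hre : z.re = Real.cos |z.arg| := by
    rw [Real.cos_abs, ← Complex.exp_ofReal_mul_I_re, hexp]
  have hcos : Real.cos (n * |z.arg|) = Real.cos Real.pi := by
    rw [← Nat.abs_cast n, ← abs_mul, Real.cos_abs, ← Complex.exp_ofReal_mul_I_re,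
      Complex.ofReal_mul, mul_assoc, Complex.ofReal_natCast, Complex.exp_nat_mul, hexp, hz]
    simp
  have harg : Real.pi / n ≤ |z.arg| := by
    by_contra! hlt
    rw [lt_div_iff₀' hn0] at hlt
    exact (Real.cos_lt_cos_of_nonneg_of_le_pi (by positivity) le_rfl hlt).ne' hcos
  rw [hre]
  exact Real.cos_le_cos_of_nonneg_of_le_pi (by positivity) (Complex.abs_arg_le_pi z) harg

lemma re_conj_mul_pow_le_cos_pi_div (hu : ‖u‖ = 1) (hz : z ^ (k * L) = -u ^ L) :
    (conj u * z ^ k).re ≤ Real.cos (Real.pi / L) := by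
  have hu0 : u ≠ 0 := norm_ne_zero_iff.1 (by rw [hu]; exact one_ne_zero)
  refine re_le_cos_pi_div_of_pow_eq_neg_one ?_
  rw [mul_pow, ← pow_mul, hz, mul_neg, ← mul_pow, ← Complex.inv_eq_conj hu,
    inv_mul_cancel₀ hu0, one_pow]

lemma sum_nthRootsFinset_re_conj_mul_pow_mul_sum (hc : ‖c‖ = 1) (u : ℂ) (b : ℕ → ℂ) (hk : 0 < k)
    (hkm : k < m) (hn : m + k ≤ n) :
    ∑ z ∈ nthRootsFinset n c, ((conj u * z ^ k).re : ℂ) * ∑ l ∈ range m, b l * z ^ l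
      = n * (u * b k / 2) := by
  have : NeZero n := ⟨by omega⟩
  have hc0 : c ≠ 0 := norm_ne_zero_iff.1 (by rw [hc]; exact one_ne_zero)
  have hre : ∀ z ∈ nthRootsFinset n c,
      ((conj u * z ^ k).re : ℂ) = conj u / 2 * z ^ k + u / 2 * (z ^ k)⁻¹ := by
    intro z hz
    have hz1 := norm_eq_one_of_mem_nthRootsFinset hc hz
    rw [Complex.re_eq_add_conj, map_mul, Complex.conj_conj,
      Complex.inv_eq_conj (by rw [norm_pow, hz1, one_pow])]
    ring
  rw [sum_congr rfl fun z hz ↦ by rw [hre z hz, add_mul, mul_assoc, mul_assoc], sum_add_distrib,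
    ← mul_sum, ← mul_sum, sum_nthRootsFinset_pow_mul_sum_eq_zero c b hk hn,
    sum_nthRootsFinset_inv_pow_mul_sum hc0 b hkm (by omega)]
  ring

lemma norm_coeff_le_of_re_nonneg_of_norm_eq_one (hk : 0 < k) (hkm : k < m) (hL : m + k ≤ k * L)
    (b : ℕ → ℂ) (hb : ∀ z : ℂ, ‖z‖ = 1 → 0 ≤ (∑ l ∈ range m, b l * z ^ l).re) :
    ‖b k‖ ≤ 2 * (b 0).re * Real.cos (Real.pi / L) := by
  obtain ⟨u, hu, hub⟩ := Complex.exists_norm_eq_mul_self (b k)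
  set q : ℂ → ℂ := fun z ↦ ∑ l ∈ range m, b l * z ^ l
  set t := Real.cos (Real.pi / L)
  set nodes := nthRootsFinset (k * L) (-u ^ L)
  have hN : 0 < k * L := by omega
  have : NeZero (k * L) := ⟨hN.ne'⟩
  have hc : ‖-u ^ L‖ = 1 := by rw [norm_neg, norm_pow, hu, one_pow]
  have hweight : ∀ z ∈ nodes, (conj u * z ^ k).re ≤ t := fun z hz ↦
    re_conj_mul_pow_le_cos_pi_div hu ((mem_nthRootsFinset hN _).1 hz)
  have hmean : ∑ z ∈ nodes, q z = (k * L : ℕ) * b 0 := by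
    simpa using sum_nthRootsFinset_inv_pow_mul_sum (k := 0) (n := k * L)
      (norm_ne_zero_iff.1 (by simp [hc])) b (by omega : 0 < m) (by omega)
  have hsum : ∑ z ∈ nodes, ((t - (conj u * z ^ k).re : ℝ) : ℂ) * q z
      = ((k * L : ℕ) : ℝ) * (t * b 0 - (‖b k‖ / 2 : ℝ)) := by
    simp only [Complex.ofReal_sub, sub_mul, sum_sub_distrib, ← mul_sum]
    rw [hmean, sum_nthRootsFinset_re_conj_mul_pow_mul_sum hc u b hk hkm hL, ← hub]
    push_cast
    ring
  have hnonneg : 0 ≤ ((k * L : ℕ) : ℝ) * (t * (b 0).re - ‖b k‖ / 2) := by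
    rw [← Complex.re_ofReal_mul, ← Complex.ofReal_re (‖b k‖ / 2), ← Complex.sub_re,
      ← Complex.re_ofReal_mul, ← hsum, Complex.re_sum]
    refine sum_nonneg fun z hz ↦ ?_
    rw [Complex.re_ofReal_mul]
    exact mul_nonneg (sub_nonneg.2 (hweight z hz))
      (hb z (norm_eq_one_of_mem_nthRootsFinset hc hz))
  have := nonneg_of_mul_nonneg_right hnonneg (by exact_mod_cast hN)
  linarith

end UnitCircle

theorem stmt_7_general (m : ℕ) (a : ℕ → ℂ) (A : ℝ)
    (hre : ∀ z ∈ Metric.ball (0 : ℂ) 1, (∑ k ∈ Finset.range m, a k * z ^ k).re ≤ A)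
    {k : ℕ} (hk : 0 < k) (hkm : k < m) :
    ‖a k‖ ≤ 2 * (A - (a 0).re) * Real.cos (Real.pi / (((m - 1) / k + 2 : ℕ) : ℝ)) := by
  have hlen : m + k ≤ k * ((m - 1) / k + 2) := by
    have := Nat.lt_mul_div_succ (m - 1) hk
    rw [mul_add] at this ⊢
    omega
  have hsphere (z : ℂ) (hz : ‖z‖ = 1) : (∑ l ∈ Finset.range m, a l * z ^ l).re ≤ A := by
    refine le_on_closure (f := fun z : ℂ ↦ (∑ l ∈ Finset.range m, a l * z ^ l).re)
      (g := fun _ ↦ A) hre (by fun_prop) (by fun_prop) ?_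
    simp [closure_ball, hz]
  set b : ℕ → ℂ := Pi.single 0 (A : ℂ) - a with hb
  have hsub (z : ℂ) : ∑ l ∈ Finset.range m, b l * z ^ l
      = A - ∑ l ∈ Finset.range m, a l * z ^ l := by
    simp [hb, sub_mul, Pi.single_apply, hk.trans hkm]
  have hbound := norm_coeff_le_of_re_nonneg_of_norm_eq_one hk hkm hlen b fun z hz ↦ by
    rw [hsub, Complex.sub_re, Complex.ofReal_re]
    exact sub_nonneg.2 (hsphere z hz)
  simpa [hb, hk.ne'] using hbound

theorem stmt_7 (m : ℕ) (hm : 2 ≤ m) (a : ℕ → ℂ)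
    (ha_im : (a 0).im = 0) (ha_nonneg : 0 ≤ (a 0).re)
    (hre : ∀ z ∈ Metric.ball (0 : ℂ) 1, (∑ k ∈ Finset.range m, a k * z ^ k).re ≤ 1) :
    ∀ k : ℕ, 1 ≤ k → k ≤ m - 1 →
      ‖a k‖ ≤
        2 * (1 - (a 0).re) * Real.cos (Real.pi / (((m - 1) / k + 2 : ℕ) : ℝ)) :=
  fun _ hk hkm ↦ stmt_7_general m a 1 hre hk (by omega)
end

section
/- Let m ≥ 2 be an integer and let p(z) = ∑_{k=0}^{m−1} a_k z^k be a polynomial with complex coefficients such that |p(z)| ≤ 1 for all z ∈ 𝔻. Then ∑_{k=0}^{m−1} |a_k| r^k ≤ 1 for every r with 0 ≤ r ≤ t_m. -/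
open scoped BigOperators

/-!
Let `p = ∑_{l < m} a_l z^l` be bounded by `1` on the unit circle. After a rotation making `a_0 ≥ 0`,
`1 - p` has nonnegative real part there, so everything rests on the inequality of Egerváry and Szász
`|b_k| ≤ 2 cos (π / n) Re b_0`, `n = ⌊(m-1)/k⌋ + 2`, for polynomials `∑_{l < m} b_l z^l` whose real
part is nonnegative on the circle. It is proved by quadrature over the roots of `z^{kn} = -1`. Each
such `z` has `(z^k)^n = -1`, which forces `Re z^k ≤ cos (π / n)`, so the weight
`cos (π / n) - Re z^k` is nonnegative at all nodes. Since `kn ≥ m + k`, the weighted sum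
over the nodes sees only `b_0` and `b_k`. Summing `|a_k| ≤ 2 cos (π / n) (1 - |a_0|)`
against `t^k` bounds `∑ |a_k| t^k` by `|a_0| + 2 (1 - |a_0|) f_m(t)`, which is `1` when
`f_m(t) = 1/2`.
-/

open Finset
open Polynomial (nthRootsFinset mem_nthRootsFinset)

theorem norm_eq_one_of_norm_pow_eq_one {K : Type*} [NormedDivisionRing K] {z : K} {n : ℕ}
    (hn : n ≠ 0) (hz : ‖z ^ n‖ = 1) : ‖z‖ = 1 := by
  rwa [norm_pow, pow_eq_one_iff_of_nonneg (norm_nonneg z) hn] at hz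

theorem re_le_cos_pi_div_of_pow_eq_neg_one_s9 {w : ℂ} {n : ℕ} (hw : w ^ n = -1) :
    w.re ≤ Real.cos (Real.pi / n) := by
  have hn : n ≠ 0 := by
    rintro rfl
    norm_num at hw
  have hn_pos : (0 : ℝ) < n := by positivity
  have hw_norm : ‖w‖ = 1 := norm_eq_one_of_norm_pow_eq_one hn (by simp [hw])
  have hw_exp : w = Complex.exp (w.arg * Complex.I) := by
    simpa [hw_norm] using (Complex.norm_mul_exp_arg_mul_I w).symm
  have pi_div_le_abs_arg : Real.pi / n ≤ |w.arg| := by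
    by_contra! h
    rw [lt_div_iff₀' hn_pos, ← Nat.abs_cast n, ← abs_mul, abs_lt] at h
    have hw_pow : Complex.exp ((n * w.arg : ℝ) * Complex.I) = -1 := by
      rw [Complex.ofReal_mul, Complex.ofReal_natCast, mul_assoc, Complex.exp_nat_mul, ← hw_exp, hw]
    have arg_eq : n * w.arg = Real.pi := by
      rw [← Complex.arg_neg_one, ← hw_pow, Complex.arg_exp_mul_I,
        (toIocMod_eq_self Real.two_pi_pos).2 ⟨h.1, by linarith [h.2]⟩]
    exact h.2.ne arg_eq
  calc w.re = Real.cos |w.arg| := by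
        rw [Real.cos_abs, ← Complex.norm_mul_cos_arg, hw_norm, one_mul]
    _ ≤ Real.cos (Real.pi / n) :=
        Real.cos_le_cos_of_nonneg_of_le_pi (by positivity) (Complex.abs_arg_le_pi w)
          pi_div_le_abs_arg

theorem sum_zpow_nthRootsFinset {K : Type*} [Field K] {M : ℕ} {ω : K} (hω : IsPrimitiveRoot ω M)
    (a : K) {i : ℤ} (hi : |i| < M) :
    ∑ z ∈ nthRootsFinset M a, z ^ i = if i = 0 then (#(nthRootsFinset M a) : K) else 0 := by
  have hM : 0 < M := by exact_mod_cast (abs_nonneg i).trans_lt hi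
  split_ifs with hi₀
  · simp [hi₀]
  have rotation_invariant :
      ω ^ i * ∑ z ∈ nthRootsFinset M a, z ^ i = ∑ z ∈ nthRootsFinset M a, z ^ i := by
    rw [mul_sum]
    refine sum_nbij' (ω * ·) (ω⁻¹ * ·) ?_ ?_ ?_ ?_ ?_
    · simp +contextual [mem_nthRootsFinset hM, mul_pow, hω.pow_eq_one]
    · simp +contextual [mem_nthRootsFinset hM, mul_pow, hω.pow_eq_one]
    · simp [hω.ne_zero hM.ne']
    · simp [hω.ne_zero hM.ne']
    · simp [mul_zpow]
  have hωi : ω ^ i ≠ 1 := fun h =>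
    hi₀ (Int.eq_zero_of_abs_lt_dvd ((hω.zpow_eq_one_iff_dvd i).1 h) hi)
  exact (mul_left_eq_self₀.1 rotation_invariant).resolve_left hωi

theorem sum_sub_re_pow_mul_pow_nthRootsFinset {M k l : ℕ} (hk : k ≠ 0) (hM : l + k < M) {a : ℂ}
    (ha : ‖a‖ = 1) (c : ℝ) :
    ∑ z ∈ nthRootsFinset M a, ((c - (z ^ k).re : ℝ) : ℂ) * z ^ l =
      #(nthRootsFinset M a) * ((if l = 0 then (c : ℂ) else 0) - if l = k then 1 / 2 else 0) := by
  have hM_pos : 0 < M := by omega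
  have expand : ∀ z ∈ nthRootsFinset M a, ((c - (z ^ k).re : ℝ) : ℂ) * z ^ l =
      c * z ^ (l : ℤ) - z ^ (l + k : ℤ) / 2 - z ^ (l - k : ℤ) / 2 := by
    intro z hz
    have hz_norm : ‖z‖ = 1 :=
      norm_eq_one_of_norm_pow_eq_one hM_pos.ne' (by rw [(mem_nthRootsFinset hM_pos a).1 hz, ha])
    have hz₀ : z ≠ 0 := norm_ne_zero_iff.1 (by simp [hz_norm])
    rw [Complex.ofReal_sub, Complex.re_eq_add_conj, map_pow, ← Complex.inv_eq_conj hz_norm,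
      zpow_add₀ hz₀, zpow_sub₀ hz₀, zpow_natCast, zpow_natCast]
    ring
  have hω := Complex.isPrimitiveRoot_exp M hM_pos.ne'
  rw [sum_congr rfl expand, sum_sub_distrib, sum_sub_distrib, ← mul_sum, ← sum_div, ← sum_div,
    sum_zpow_nthRootsFinset hω a (by rw [abs_lt]; omega),
    sum_zpow_nthRootsFinset hω a (by rw [abs_lt]; omega),
    sum_zpow_nthRootsFinset hω a (by rw [abs_lt]; omega),
    if_neg (show (l + k : ℤ) ≠ 0 by omega)]
  simp only [Nat.cast_eq_zero, sub_eq_zero, Nat.cast_inj]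
  split_ifs <;> ring

theorem sum_sub_re_pow_mul_sum_nthRootsFinset {m M k : ℕ} (hk₀ : k ≠ 0) (hk : k < m)
    (hM : m + k ≤ M) {a : ℂ} (ha : ‖a‖ = 1) (c : ℝ) (b : ℕ → ℂ) :
    ∑ z ∈ nthRootsFinset M a, ((c - (z ^ k).re : ℝ) : ℂ) * ∑ l ∈ range m, b l * z ^ l =
      #(nthRootsFinset M a) * (c * b 0 - b k / 2) := by
  set N := #(nthRootsFinset M a)
  calc ∑ z ∈ nthRootsFinset M a, ((c - (z ^ k).re : ℝ) : ℂ) * ∑ l ∈ range m, b l * z ^ l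
      = ∑ l ∈ range m, b l * ∑ z ∈ nthRootsFinset M a, ((c - (z ^ k).re : ℝ) : ℂ) * z ^ l := by
        simp only [mul_sum]
        rw [sum_comm]
        simp only [mul_left_comm]
    _ = ∑ l ∈ range m,
          b l * (N * ((if l = 0 then (c : ℂ) else 0) - if l = k then 1 / 2 else 0)) := by
        refine sum_congr rfl fun l hl => ?_
        have hl_lt := mem_range.1 hl
        rw [sum_sub_re_pow_mul_pow_nthRootsFinset hk₀ (by omega) ha]
    _ = N * (c * b 0 - b k / 2) := by
        simp only [mul_sub, mul_ite, mul_zero, sum_sub_distrib, sum_ite_eq', mem_range, hk,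
          Nat.zero_lt_of_lt hk, if_true]
        ring

section CoefficientBounds

variable {m k n : ℕ}

theorem re_coeff_le_of_re_nonneg (hk : k < m) (hn : m + k ≤ k * n) {b : ℕ → ℂ}
    (hb : ∀ z : ℂ, ‖z‖ = 1 → 0 ≤ (∑ l ∈ range m, b l * z ^ l).re) :
    (b k).re ≤ 2 * Real.cos (Real.pi / n) * (b 0).re := by
  have hk₀ : k ≠ 0 := by rintro rfl; omega
  have hM : 0 < k * n := by omega
  set c := Real.cos (Real.pi / n)
  set S := nthRootsFinset (k * n) (-1 : ℂ)
  have pow_eq {z : ℂ} (hz : z ∈ S) : z ^ (k * n) = -1 := (mem_nthRootsFinset hM _).1 hz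
  have S_card_pos : (0 : ℝ) < #S := by
    obtain ⟨z, hz⟩ := IsAlgClosed.exists_pow_nat_eq (-1 : ℂ) hM
    exact Nat.cast_pos.2 (card_pos.2 ⟨z, (mem_nthRootsFinset hM _).2 hz⟩)
  have weighted_sum_nonneg : 0 ≤ #S * (c * (b 0).re - (b k).re / 2) := by
    calc 0 ≤ ∑ z ∈ S, (c - (z ^ k).re) * (∑ l ∈ range m, b l * z ^ l).re := by
          refine sum_nonneg fun z hz => mul_nonneg (sub_nonneg.2 ?_) (hb z ?_)
          · exact re_le_cos_pi_div_of_pow_eq_neg_one_s9 (by rw [← pow_mul, pow_eq hz])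
          · exact norm_eq_one_of_norm_pow_eq_one hM.ne' (by simp [pow_eq hz])
      _ = (∑ z ∈ S, ((c - (z ^ k).re : ℝ) : ℂ) * ∑ l ∈ range m, b l * z ^ l).re := by
          simp only [Complex.re_sum, Complex.re_ofReal_mul]
      _ = #S * (c * (b 0).re - (b k).re / 2) := by
          rw [sum_sub_re_pow_mul_sum_nthRootsFinset hk₀ hk hn (by simp), ← Complex.ofReal_natCast,
            ← Complex.ofReal_ofNat, Complex.re_ofReal_mul, Complex.sub_re, Complex.re_ofReal_mul,
            Complex.div_ofReal_re]
  linarith [nonneg_of_mul_nonneg_right weighted_sum_nonneg S_card_pos]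

theorem norm_coeff_le_of_re_nonneg (hk : k < m) (hn : m + k ≤ k * n) {b : ℕ → ℂ}
    (hb : ∀ z : ℂ, ‖z‖ = 1 → 0 ≤ (∑ l ∈ range m, b l * z ^ l).re) :
    ‖b k‖ ≤ 2 * Real.cos (Real.pi / n) * (b 0).re := by
  have hk_pos : 0 < k := Nat.pos_of_ne_zero (by rintro rfl; omega)
  obtain ⟨u, hu, hub⟩ := RCLike.exists_norm_eq_mul_self (b k)
  obtain ⟨v, hv⟩ := IsAlgClosed.exists_pow_nat_eq u hk_pos
  have hv_norm : ‖v‖ = 1 := norm_eq_one_of_norm_pow_eq_one hk_pos.ne' (by rw [hv, hu])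
  have rotated_nonneg (z : ℂ) (hz : ‖z‖ = 1) :
      0 ≤ (∑ l ∈ range m, v ^ l * b l * z ^ l).re := by
    simpa only [mul_pow, mul_left_comm, mul_assoc] using hb (v * z) (by simp [hv_norm, hz])
  have h := re_coeff_le_of_re_nonneg hk hn rotated_nonneg
  rwa [hv, ← hub, pow_zero, one_mul, RCLike.ofReal_eq_complex_ofReal, Complex.ofReal_re] at h

theorem norm_coeff_le_of_norm_le_one (hk : k < m) (hn : m + k ≤ k * n) {a : ℕ → ℂ}
    (ha : ∀ z : ℂ, ‖z‖ = 1 → ‖∑ l ∈ range m, a l * z ^ l‖ ≤ 1) :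
    ‖a k‖ ≤ 2 * Real.cos (Real.pi / n) * (1 - ‖a 0‖) := by
  have hk₀ : k ≠ 0 := by rintro rfl; omega
  obtain ⟨u, hu, hua⟩ := RCLike.exists_norm_eq_mul_self (a 0)
  have one_sub_nonneg (z : ℂ) (hz : ‖z‖ = 1) :
      0 ≤ (∑ l ∈ range m, ((if l = 0 then 1 else 0) - u * a l) * z ^ l).re := by
    calc 0 ≤ 1 - ‖u * ∑ l ∈ range m, a l * z ^ l‖ := by simpa [hu] using ha z hz
      _ ≤ 1 - (u * ∑ l ∈ range m, a l * z ^ l).re := by gcongr; exact Complex.re_le_norm _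
      _ = (∑ l ∈ range m, ((if l = 0 then 1 else 0) - u * a l) * z ^ l).re := by
        rw [← Complex.one_re, ← Complex.sub_re]
        simp [sub_mul, sum_sub_distrib, mul_sum, mul_assoc, Nat.zero_lt_of_lt hk]
  have h := norm_coeff_le_of_re_nonneg hk hn one_sub_nonneg
  simpa [hk₀, hu, ← hua] using h

theorem sum_norm_coeff_mul_pow_le (hm : 0 < m) {a : ℕ → ℂ}
    (ha : ∀ z : ℂ, ‖z‖ = 1 → ‖∑ k ∈ range m, a k * z ^ k‖ ≤ 1) {t : ℝ} (ht : 0 ≤ t) :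
    ∑ k ∈ range m, ‖a k‖ * t ^ k ≤ ‖a 0‖ + 2 * (1 - ‖a 0‖) * fm m t := by
  rw [sum_range_eq_add_Ico _ hm, pow_zero, mul_one, fm, mul_sum,
    Icc_sub_one_right_eq_Ico_of_not_isMin (not_isMin_iff_ne_bot.2 hm.ne')]
  refine add_le_add le_rfl (sum_le_sum fun k hk => ?_)
  obtain ⟨hk₁, hkm⟩ := mem_Ico.1 hk
  have degree_le : m + k ≤ k * ((m - 1) / k + 2) := by
    have := Nat.lt_mul_div_succ (m - 1) hk₁
    rw [mul_add] at this ⊢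
    omega
  calc ‖a k‖ * t ^ k
      ≤ 2 * Real.cos (Real.pi / ((m - 1) / k + 2 : ℕ)) * (1 - ‖a 0‖) * t ^ k := by
        gcongr
        exact norm_coeff_le_of_norm_le_one hkm degree_le ha
    _ = 2 * (1 - ‖a 0‖) * (t ^ k * Real.cos (Real.pi / ((m - 1) / k + 2 : ℕ))) := by ring

end CoefficientBounds

theorem norm_le_on_closedBall_of_norm_le_on_ball {E F : Type*} [SeminormedAddCommGroup E]
    [NormedSpace ℝ E] [SeminormedAddCommGroup F] {f : E → F} {x : E} {R C : ℝ} (hR : R ≠ 0)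
    (hf : ContinuousOn f (Metric.closedBall x R)) (hC : ∀ y ∈ Metric.ball x R, ‖f y‖ ≤ C) :
    ∀ y ∈ Metric.closedBall x R, ‖f y‖ ≤ C := by
  rw [← closure_ball x hR] at hf ⊢
  exact fun y hy => le_on_closure hC hf.norm continuousOn_const hy

theorem stmt_9 (m : ℕ) (hm : 2 ≤ m) (a : ℕ → ℂ)
    (hbd : ∀ z ∈ Metric.ball (0 : ℂ) 1, ‖∑ k ∈ Finset.range m, a k * z ^ k‖ ≤ 1)
    (t : ℝ) (htm : t ∈ Set.Ioc (0 : ℝ) 1) (hts : fm m t = 1 / 2) :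
    ∀ r : ℝ, 0 ≤ r → r ≤ t →
      ∑ k ∈ Finset.range m, ‖a k‖ * r ^ k ≤ 1 := by
  intro r hr hrt
  have circle_bound (z : ℂ) (hz : ‖z‖ = 1) : ‖∑ k ∈ range m, a k * z ^ k‖ ≤ 1 :=
    norm_le_on_closedBall_of_norm_le_on_ball one_ne_zero (by fun_prop) hbd z (by simp [hz])
  calc ∑ k ∈ range m, ‖a k‖ * r ^ k
      ≤ ∑ k ∈ range m, ‖a k‖ * t ^ k := by gcongr
    _ ≤ ‖a 0‖ + 2 * (1 - ‖a 0‖) * fm m t :=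
        sum_norm_coeff_mul_pow_le (by omega) circle_bound htm.1.le
    _ = 1 := by rw [hts]; ring
end
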